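/- Let H be a real Hilbert space, λ ∈ ℝ, and let (f_h) be a sequence of proper, λ-convex, lower semicontinuous functions f_h : H → (-∞,∞] that Mosco-converges to a proper, λ-convex, lower semicontinuous function f : H → (-∞,∞]. Let x_{h,0}, x_{h,1}, x_0, x_1 ∈ H satisfy x_{h,i} → x_i strongly for i = 0,1 and sup_h |∇f_h|(x_{h,i}) < ∞ for i = 0,1. Then for every γ ∈ C([0,1];H) there exists a sequence γ_h ∈ C([0,1];H) converging uniformly to γ with limsup_h Θ_{f_h,x_{h,0},x_{h,1}}(γ_h) ≤ Θ_{f,x_0,x_1}(γ). -/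

import Mathlib

open Filter Topology MeasureTheory Set
open scoped ENNReal RealInnerProductSpace

noncomputable section

attribute [local instance] Classical.propDecidable

variable {H : Type*} [NormedAddCommGroup H] [InnerProductSpace ℝ H] [CompleteSpace H]

/-- `f : H → (-∞,∞]` is proper: not identically `⊤` (and it never takes the value `⊥`). -/
def ProperFn (f : H → EReal) : Prop :=
  (∃ x, f x ≠ ⊤) ∧ ∀ x, f x ≠ ⊥

/-- `f` is `λ`-convex: `x ↦ f x - (λ/2)‖x‖²` is convex, expressed via the perturbed
convexity inequality. -/
def LambdaConvex (lam : ℝ) (f : H → EReal) : Prop :=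
  ∀ x y : H, ∀ t : ℝ, 0 ≤ t → t ≤ 1 →
    f ((1 - t) • x + t • y)
      ≤ ((1 - t : ℝ) : EReal) * f x + ((t : ℝ) : EReal) * f y
        - ((lam / 2 * (t * (1 - t)) * ‖x - y‖ ^ 2 : ℝ) : EReal)

/-- The subdifferential of a `λ`-convex function at `x` (contained in the domain of `f`). -/
def subdiff (lam : ℝ) (f : H → EReal) (x : H) : Set H :=
  {p : H | f x ≠ ⊤ ∧
    ∀ y : H, f x + ((⟪p, y - x⟫ + lam / 2 * ‖y - x‖ ^ 2 : ℝ) : EReal) ≤ f y}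

/-- `∇f(x)`: the element of minimal norm of `∂f(x)` (junk value `0` if there is none). -/
def gradMin (lam : ℝ) (f : H → EReal) (x : H) : H :=
  if h : ∃ p ∈ subdiff lam f x, ∀ q ∈ subdiff lam f x, ‖p‖ ≤ ‖q‖ then h.choose else 0

/-- `|∇f|(x) ∈ [0,∞]`, equal to `+∞` when `∂f(x) = ∅` (in particular when `f x = ⊤`). -/
def gradNorm (lam : ℝ) (f : H → EReal) (x : H) : ℝ≥0∞ :=
  if (subdiff lam f x).Nonempty then ENNReal.ofReal ‖gradMin lam f x‖ else ⊤

/-- The resolvent `J_τ(x)`: the minimizer of `y ↦ f y + ‖y-x‖²/(2τ)` (junk `0` if none). -/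
def Jres (f : H → EReal) (τ : ℝ) (x : H) : H :=
  if h : ∃ y : H, ∀ z : H,
      f y + ((‖y - x‖ ^ 2 / (2 * τ) : ℝ) : EReal)
        ≤ f z + ((‖z - x‖ ^ 2 / (2 * τ) : ℝ) : EReal)
  then h.choose else 0

/-- The Moreau–Yosida regularization `f_τ(x) = min_y (f y + ‖y-x‖²/(2τ))`. -/
def moreau (f : H → EReal) (τ : ℝ) (x : H) : ℝ :=
  (f (Jres f τ x)).toReal + ‖Jres f τ x - x‖ ^ 2 / (2 * τ)

/-- `γ` is absolutely continuous on `[a,b]` with an integrable derivative. -/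
abbrev IsACCurve (a b : ℝ) (γ : ℝ → H) : Prop :=
  ∃ g : ℝ → H, IntegrableOn g (Icc a b) ∧ ∀ t ∈ Icc a b, γ t = γ a + ∫ s in a..t, g s

/-- The action `I_f^{[a,b]}(γ) = ∫_a^b (‖γ̇‖² + |∇f|²(γ)) dt ∈ [0,∞]`, set to `+∞` when `γ`
is not absolutely continuous. -/
def actionFn (lam : ℝ) (f : H → EReal) (a b : ℝ) (γ : ℝ → H) : ℝ≥0∞ :=
  if h : IsACCurve a b γ then
    ∫⁻ t in Ioc a b, (ENNReal.ofReal (‖h.choose t‖ ^ 2) + gradNorm lam f (γ t) ^ 2)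
  else ⊤

/-- `Θ_{f,x₀,x₁}`: the action on `[0,1]` with endpoint constraints. -/
def Theta (lam : ℝ) (f : H → EReal) (x0 x1 : H) (γ : ℝ → H) : ℝ≥0∞ :=
  if γ 0 = x0 ∧ γ 1 = x1 then actionFn lam f 0 1 γ else ⊤

/-- `Γ_δ(x₀,x_δ)`: infimum of the action over curves joining the endpoints. -/
def GammaInf (lam : ℝ) (f : H → EReal) (δ : ℝ) (x0 xδ : H) : ℝ≥0∞ :=
  ⨅ (γ : ℝ → H) (_ : γ 0 = x0 ∧ γ δ = xδ), actionFn lam f 0 δ γ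

/-- Mosco convergence of `fh` to `f`: recovery sequences for the strong topology, and the
`liminf` inequality along weakly convergent sequences. -/
def Mosco (fh : ℕ → H → EReal) (f : H → EReal) : Prop :=
  (∀ x : H, ∃ xh : ℕ → H, Tendsto xh atTop (𝓝 x) ∧
      Filter.limsup (fun h => fh h (xh h)) atTop ≤ f x) ∧
  (∀ (xh : ℕ → H) (x : H),
      (∀ p : H, Tendsto (fun h => ⟪xh h, p⟫) atTop (𝓝 ⟪x, p⟫)) →
      f x ≤ Filter.liminf (fun h => fh h (xh h)) atTop)

/-!
The recovery curve is `J_h ∘ (γ + c)`, where `J_h = (1 + τ ∂f_h)⁻¹` is the resolvent of `f_h` and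
the correction `c` runs, on time layers of length `τ` at both ends, from
`x_{h,i} + τ p_{h,i} - γ i` to `0`, with `p_{h,i} ∈ ∂f_h(x_{h,i})` bounded in `h`. Since
`J_h (x_{h,i} + τ p_{h,i}) = x_{h,i}`, the endpoints are exactly right. The resolvent is
`(1 + λτ)⁻¹`-Lipschitz, which controls the speed, and `(y - J_h y) / τ ∈ ∂f_h (J_h y)`, which
controls the slope: Mosco convergence yields `J_h → J`, uniformly on the compact set `γ([0,1])`, and
`‖y - J y‖ / τ ≤ (1 + λτ)⁻¹ |∇f|(y)`. On the two layers the correction has bounded speed, so it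
costs `O(τ)` in the action. Young's inequality with weight `σ`, where `τ = σ²`, separates this error
from the main term at the price of a factor `1 + σ`, and a diagonal argument lets `σ` tend to `0`
as `h → ∞`.
-/

theorem ProperFn.coe_toReal {X : Type*} {f : X → EReal} (hf : ProperFn f) {x : X} (hx : f x ≠ ⊤) :
    ((f x).toReal : EReal) = f x :=
  EReal.coe_toReal hx (hf.2 x)

section ConvexAnalysis

variable {E : Type*} [NormedAddCommGroup E] [InnerProductSpace ℝ E]
  {lam τ : ℝ} {f : E → EReal} {x y p q : E}

theorem ProperFn.mem_subdiff_iff (hf : ProperFn f) :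
    p ∈ subdiff lam f x ↔ f x ≠ ⊤ ∧ ∀ y, f y ≠ ⊤ →
      (f x).toReal + (⟪p, y - x⟫ + lam / 2 * ‖y - x‖ ^ 2) ≤ (f y).toReal := by
  refine and_congr_right fun hx => forall_congr' fun y => ?_
  by_cases hy : f y = ⊤
  · simp only [hy, le_top, ne_eq, not_true_eq_false, false_imp_iff]
  · rw [← hf.coe_toReal hx, ← hf.coe_toReal hy]
    simp only [EReal.toReal_coe, ne_eq, EReal.coe_ne_top, not_false_eq_true, forall_const]
    norm_cast

theorem subdiff_monotone (hf : ProperFn f) (hp : p ∈ subdiff lam f x) (hq : q ∈ subdiff lam f y) :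
    lam * ‖x - y‖ ^ 2 ≤ ⟪p - q, x - y⟫ := by
  rw [hf.mem_subdiff_iff] at hp hq
  have hxy := hp.2 y hq.1
  have hyx := hq.2 x hp.1
  rw [← neg_sub x y, inner_neg_right, norm_neg] at hxy
  rw [inner_sub_left]
  linarith

theorem mul_norm_sub_le_of_mem_subdiff (hf : ProperFn f) (hτ : 0 < τ)
    (hp : p ∈ subdiff lam f x) (hq : q ∈ subdiff lam f y) :
    (1 + lam * τ) * ‖x - y‖ ≤ ‖(x + τ • p) - (y + τ • q)‖ := by
  have hinner : (1 + lam * τ) * ‖x - y‖ ^ 2 ≤ ⟪(x + τ • p) - (y + τ • q), x - y⟫ := by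
    rw [show (x + τ • p) - (y + τ • q) = (x - y) + τ • (p - q) by module, inner_add_left,
      real_inner_self_eq_norm_sq, real_inner_smul_left]
    linarith [mul_le_mul_of_nonneg_left (subdiff_monotone hf hp hq) hτ.le]
  have hcs := hinner.trans (real_inner_le_norm _ _)
  rcases (norm_nonneg (x - y)).eq_or_lt' with hzero | hpos
  · simp only [hzero, mul_zero, norm_nonneg]
  · exact le_of_mul_le_mul_right (by linarith) hpos

theorem subdiff_eq_iInter (hf : ProperFn f) (hx : f x ≠ ⊤) :
    subdiff lam f x = ⋂ (y : E) (_ : f y ≠ ⊤),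
      {p | ⟪y - x, p⟫ ≤ (f y).toReal - (f x).toReal - lam / 2 * ‖y - x‖ ^ 2} := by
  ext p
  simp only [hf.mem_subdiff_iff, ne_eq, hx, not_false_eq_true, true_and, mem_iInter,
    mem_ofPred_eq, real_inner_comm p]
  exact forall₂_congr fun y _ => ⟨fun h => by linarith, fun h => by linarith⟩

theorem isClosed_subdiff (hf : ProperFn f) (hx : f x ≠ ⊤) : IsClosed (subdiff lam f x) := by
  rw [subdiff_eq_iInter hf hx]
  exact isClosed_iInter fun y => isClosed_iInter fun _ => isClosed_le (by fun_prop) continuous_const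

theorem convex_subdiff (hf : ProperFn f) (hx : f x ≠ ⊤) : Convex ℝ (subdiff lam f x) := by
  rw [subdiff_eq_iInter hf hx]
  exact convex_iInter fun y => convex_iInter fun _ =>
    convex_halfSpace_le (innerSL ℝ (y - x)).toLinearMap.isLinear _

theorem gradNorm_le_ofReal_norm (hp : p ∈ subdiff lam f x) :
    gradNorm lam f x ≤ ENNReal.ofReal ‖p‖ := by
  rw [gradNorm, if_pos ⟨p, hp⟩]
  refine ENNReal.ofReal_le_ofReal ?_
  rw [gradMin]
  split_ifs with hmin
  · exact hmin.choose_spec.2 p hp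
  · simp only [norm_zero, norm_nonneg]

theorem exists_mem_subdiff_gradNorm_eq [CompleteSpace E] (hf : ProperFn f)
    (hx : gradNorm lam f x ≠ ⊤) :
    ∃ p ∈ subdiff lam f x, gradNorm lam f x = ENNReal.ofReal ‖p‖ := by
  have hne : (subdiff lam f x).Nonempty := by
    by_contra hempty
    exact hx (by rw [gradNorm, if_neg hempty])
  have hmin : ∃ p ∈ subdiff lam f x, ∀ q ∈ subdiff lam f x, ‖p‖ ≤ ‖q‖ := by
    have hfx : f x ≠ ⊤ := hne.some_mem.1
    obtain ⟨p, hp, hpmin⟩ := exists_norm_eq_iInf_of_complete_convex hne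
      (isClosed_subdiff hf hfx).isComplete (convex_subdiff hf hfx) 0
    refine ⟨p, hp, fun q hq => ?_⟩
    have hle := ciInf_le ⟨0, forall_mem_range.2 fun w : subdiff lam f x => norm_nonneg (0 - w.1)⟩
      ⟨q, hq⟩
    rw [← hpmin] at hle
    simpa only [zero_sub, norm_neg] using hle
  rw [gradNorm, if_pos hne, gradMin, dif_pos hmin]
  exact ⟨_, hmin.choose_spec.1, rfl⟩

theorem LambdaConvex.le_coe (hf : LambdaConvex lam f) {a b t : ℝ} (ha : f x ≤ a) (hb : f y ≤ b)
    (ht0 : 0 ≤ t) (ht1 : t ≤ 1) :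
    f ((1 - t) • x + t • y) ≤
      (((1 - t) * a + t * b - lam / 2 * (t * (1 - t)) * ‖x - y‖ ^ 2 : ℝ) : EReal) := by
  refine (hf x y t ht0 ht1).trans ?_
  rw [EReal.coe_sub ((1 - t) * a + t * b), EReal.coe_add, EReal.coe_mul, EReal.coe_mul]
  have h1t : (0 : EReal) ≤ ((1 - t : ℝ) : EReal) := EReal.coe_nonneg.2 (sub_nonneg.2 ht1)
  have h0t : (0 : EReal) ≤ (t : EReal) := EReal.coe_nonneg.2 ht0
  exact EReal.sub_le_sub (add_le_add (mul_le_mul_of_nonneg_left ha h1t)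
    (mul_le_mul_of_nonneg_left hb h0t)) le_rfl

theorem LambdaConvex.zero_mem_subdiff (hf : LambdaConvex lam f) (hp : ProperFn f)
    (hmin : ∀ z, f y ≤ f z) : (0 : E) ∈ subdiff lam f y := by
  obtain ⟨x, hx⟩ := hp.1
  have hy : f y ≠ ⊤ := ((hmin x).trans_lt hx.lt_top).ne
  refine hp.mem_subdiff_iff.2 ⟨hy, fun z hz => ?_⟩
  have hsegment : ∀ᶠ t : ℝ in 𝓝[>] 0,
      (f y).toReal + lam / 2 * (1 - t) * ‖y - z‖ ^ 2 ≤ (f z).toReal := by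
    filter_upwards [Ioo_mem_nhdsGT (one_pos (α := ℝ))] with t ht
    have hle := (hmin _).trans (hf.le_coe (hp.coe_toReal hy).ge (hp.coe_toReal hz).ge
      ht.1.le ht.2.le)
    rw [← hp.coe_toReal hy, EReal.coe_le_coe_iff, EReal.toReal_coe] at hle
    exact le_of_mul_le_mul_left (by linarith) ht.1
  have hlim : Tendsto (fun t : ℝ => (f y).toReal + lam / 2 * (1 - t) * ‖y - z‖ ^ 2) (𝓝[>] 0)
      (𝓝 ((f y).toReal + lam / 2 * (1 - 0) * ‖y - z‖ ^ 2)) :=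
    (Continuous.tendsto (by fun_prop) 0).mono_left nhdsWithin_le_nhds
  simpa only [sub_zero, mul_one, inner_zero_left, zero_add, norm_sub_rev z y]
    using le_of_tendsto hlim hsegment

theorem LambdaConvex.exists_forall_coe_le (hf : LambdaConvex lam f) (hlam : 0 < lam)
    (hp : ProperFn f) (hlsc : LowerSemicontinuous f) : ∃ m : ℝ, ∀ y, (m : EReal) ≤ f y := by
  obtain ⟨x, hx⟩ := hp.1
  obtain ⟨a, ha⟩ : ∃ a : ℝ, (a : EReal) = f x := ⟨_, hp.coe_toReal hx⟩
  obtain ⟨r, hr, hball⟩ : ∃ r > 0, ∀ y, dist y x < r → ((a - 1 : ℝ) : EReal) < f y :=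
    Metric.eventually_nhds_iff.1
      (hlsc x _ ((EReal.coe_lt_coe_iff.2 (sub_one_lt a)).trans_eq ha))
  have hC : 0 < 4 / (lam * r ^ 2) := by positivity
  refine ⟨a - 1 - 4 / (lam * r ^ 2), fun y => le_of_not_gt fun hy => ?_⟩
  set d := ‖x - y‖
  have hd : r ≤ d := by
    refine le_of_not_gt fun hd => (hball y (by rwa [dist_eq_norm'])).not_ge (hy.le.trans ?_)
    exact EReal.coe_le_coe_iff.2 (by linarith)
  have hd0 : 0 < d := hr.trans_le hd
  have ht0 : 0 < r / (2 * d) := by positivity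
  have ht1 : r / (2 * d) ≤ 1 / 2 := by rw [div_le_iff₀ (by positivity)]; linarith
  have hz : dist ((1 - r / (2 * d)) • x + (r / (2 * d)) • y) x < r := by
    rw [dist_eq_norm', show x - ((1 - r / (2 * d)) • x + (r / (2 * d)) • y)
      = (r / (2 * d)) • (x - y) by module, norm_smul, Real.norm_of_nonneg ht0.le]
    have : r / (2 * d) * d = r / 2 := by field_simp
    linarith
  have hconv := EReal.coe_lt_coe_iff.1 <| (hball _ hz).trans_le <|
    hf.le_coe ha.ge hy.le ht0.le (ht1.trans (by norm_num))
  have hsq : 2 * d / r ≤ 4 / (lam * r ^ 2) + lam / 4 * d ^ 2 := by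
    have : 4 / (lam * r ^ 2) + lam / 4 * d ^ 2 - 2 * d / r
        = (4 - lam * d * r) ^ 2 / (4 * lam * r ^ 2) := by field_simp; ring
    linarith [show 0 ≤ (4 - lam * d * r) ^ 2 / (4 * lam * r ^ 2) by positivity]
  have hone : r / (2 * d) * (2 * d / r) = 1 := by field_simp
  have hhalf : 0 ≤ lam / 2 * (r / (2 * d)) * d ^ 2 * (1 / 2 - r / (2 * d)) := by
    have := sub_nonneg.2 ht1
    positivity
  nlinarith [mul_le_mul_of_nonneg_left hsq ht0.le]

theorem LambdaConvex.norm_sub_sq_le (hf : LambdaConvex lam f) {m δ : ℝ}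
    (hm : ∀ z, (m : EReal) ≤ f z) (hx : f x ≤ (m + δ : ℝ)) (hy : f y ≤ (m + δ : ℝ)) :
    lam / 8 * ‖x - y‖ ^ 2 ≤ δ := by
  have hmid := (hm _).trans (hf.le_coe hx hy (t := 1 / 2) (by norm_num) (by norm_num))
  rw [EReal.coe_le_coe_iff] at hmid
  linarith

/-- Sublevel sets close to the infimum have small diameter, so Cantor's intersection theorem
applies. -/
theorem LambdaConvex.exists_forall_le [CompleteSpace E] (hf : LambdaConvex lam f) (hlam : 0 < lam)
    (hp : ProperFn f) (hlsc : LowerSemicontinuous f) : ∃ y, ∀ z, f y ≤ f z := by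
  obtain ⟨m₀, hm₀⟩ := hf.exists_forall_coe_le hlam hp hlsc
  obtain ⟨x, hx⟩ := hp.1
  obtain ⟨m, hm⟩ : ∃ m : ℝ, (m : EReal) = ⨅ z, f z :=
    ⟨_, EReal.coe_toReal ((iInf_le f x).trans_lt hx.lt_top).ne
      ((EReal.bot_lt_coe m₀).trans_le (le_iInf hm₀)).ne'⟩
  have hle : ∀ z, (m : EReal) ≤ f z := fun z => hm.trans_le (iInf_le f z)
  let S : ℕ → Set E := fun n => f ⁻¹' Iic ((m + 1 / (n + 1) : ℝ) : EReal)
  have hdist : ∀ n, ∀ y ∈ S n, ∀ z ∈ S n, dist y z ≤ √(8 / lam * (1 / (n + 1))) := by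
    refine fun n y hy z hz => Real.le_sqrt_of_sq_le ?_
    have := hf.norm_sub_sq_le hle hy hz
    rw [dist_eq_norm]
    calc ‖y - z‖ ^ 2 = 8 / lam * (lam / 8 * ‖y - z‖ ^ 2) := by field_simp
      _ ≤ 8 / lam * (1 / (n + 1)) := by gcongr
  have hdiam : Tendsto (fun n => Metric.diam (S n)) atTop (𝓝 0) := by
    refine squeeze_zero (fun n => Metric.diam_nonneg)
      (fun n => Metric.diam_le_of_forall_dist_le (Real.sqrt_nonneg _) (hdist n)) ?_
    simpa only [mul_zero, Real.sqrt_zero]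
      using (tendsto_one_div_add_atTop_nhds_zero_nat.const_mul (8 / lam)).sqrt
  have hne : ∀ N, (⋂ n ≤ N, S n).Nonempty := by
    intro N
    obtain ⟨y, hy⟩ := iInf_lt_iff.1 (hm ▸ EReal.coe_lt_coe_iff.2
      (lt_add_of_pos_right m (Nat.one_div_pos_of_nat (n := N))))
    refine ⟨y, mem_iInter₂.2 fun n hn => hy.le.trans (EReal.coe_le_coe_iff.2 ?_)⟩
    gcongr
  obtain ⟨y, hy⟩ := Metric.nonempty_iInter_of_nonempty_biInter
    (fun n => hlsc.isClosed_preimage _)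
    (fun n => Metric.isBounded_iff.2 ⟨_, fun u hu v hv => hdist n u hu v hv⟩) hne hdiam
  refine ⟨y, fun z => le_trans ?_ (hle z)⟩
  have hlim : Tendsto (fun n : ℕ => ((m + 1 / (n + 1) : ℝ) : EReal)) atTop (𝓝 m) := by
    simpa only [add_zero, Function.comp_def] using (continuous_coe_real_ereal.tendsto _).comp
      (tendsto_one_div_add_atTop_nhds_zero_nat.const_add m)
  exact ge_of_tendsto' hlim (mem_iInter.1 hy)

end ConvexAnalysis

section Resolvent

open scoped NNReal

variable {E : Type*} [NormedAddCommGroup E] {lam τ : ℝ} {f : E → EReal} {x y : E}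

/-- The function minimized by the resolvent `J_τ(x)`. -/
def proxObjective (f : E → EReal) (τ : ℝ) (x y : E) : EReal :=
  f y + ((‖y - x‖ ^ 2 / (2 * τ) : ℝ) : EReal)

theorem proxObjective_ne_top_iff : proxObjective f τ x y ≠ ⊤ ↔ f y ≠ ⊤ :=
  EReal.add_ne_top_iff_ne_top_left (EReal.coe_ne_bot _) (EReal.coe_ne_top _)

theorem ProperFn.proxObjective (hf : ProperFn f) : ProperFn (proxObjective f τ x) :=
  ⟨hf.1.imp fun _ => proxObjective_ne_top_iff.2,
    fun y => EReal.add_ne_bot_iff.2 ⟨hf.2 y, EReal.coe_ne_bot _⟩⟩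

theorem lowerSemicontinuous_proxObjective (hf : LowerSemicontinuous f) :
    LowerSemicontinuous (proxObjective f τ x) :=
  hf.add' (continuous_coe_real_ereal.comp (by fun_prop)).lowerSemicontinuous fun _ =>
    EReal.continuousAt_add (Or.inr (EReal.coe_ne_bot _)) (Or.inr (EReal.coe_ne_top _))

variable [InnerProductSpace ℝ E] {J : E → E} {p : E}

/-- `J` is the resolvent `(id + τ ∂f)⁻¹`. -/
def IsResolvent (lam : ℝ) (f : E → EReal) (τ : ℝ) (J : E → E) : Prop :=
  ∀ x, τ⁻¹ • (x - J x) ∈ subdiff lam f (J x)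

theorem norm_convexCombination_sub_sq (x y z : E) (t : ℝ) :
    ‖((1 - t) • x + t • y) - z‖ ^ 2 =
      (1 - t) * ‖x - z‖ ^ 2 + t * ‖y - z‖ ^ 2 - t * (1 - t) * ‖x - y‖ ^ 2 := by
  rw [show ((1 - t) • x + t • y) - z = (1 - t) • (x - z) + t • (y - z) by module,
    show x - y = (x - z) - (y - z) by abel, norm_add_sq_real, norm_sub_sq_real (x - z), norm_smul,
    norm_smul, real_inner_smul_left, real_inner_smul_right, mul_pow, mul_pow]
  simp only [Real.norm_eq_abs, sq_abs]
  ring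

theorem LambdaConvex.proxObjective (hf : LambdaConvex lam f) :
    LambdaConvex (lam + τ⁻¹) (proxObjective f τ x) := by
  intro y z t ht0 ht1
  have hquad : -(lam / 2 * (t * (1 - t)) * ‖y - z‖ ^ 2)
        + ‖((1 - t) • y + t • z) - x‖ ^ 2 / (2 * τ)
      = (1 - t) * (‖y - x‖ ^ 2 / (2 * τ)) + t * (‖z - x‖ ^ 2 / (2 * τ))
        + -((lam + τ⁻¹) / 2 * (t * (1 - t)) * ‖y - z‖ ^ 2) := by
    rw [norm_convexCombination_sub_sq]
    ring
  have h1t : (0 : EReal) ≤ ((1 - t : ℝ) : EReal) := EReal.coe_nonneg.2 (sub_nonneg.2 ht1)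
  have h0t : (0 : EReal) ≤ (t : EReal) := EReal.coe_nonneg.2 ht0
  refine (add_le_add_left (hf y z t ht0 ht1) _).trans_eq ?_
  unfold _root_.proxObjective
  rw [EReal.left_distrib_of_nonneg_of_ne_top h1t (EReal.coe_ne_top _),
    EReal.left_distrib_of_nonneg_of_ne_top h0t (EReal.coe_ne_top _),
    sub_eq_add_neg (_ + _ : EReal), sub_eq_add_neg (_ + _ : EReal), ← EReal.coe_neg,
    ← EReal.coe_neg, add_assoc, ← EReal.coe_add, hquad, EReal.coe_add, EReal.coe_add,
    EReal.coe_mul, EReal.coe_mul]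
  abel

theorem mem_subdiff_proxObjective_iff :
    p ∈ subdiff (lam + τ⁻¹) (proxObjective f τ x) y ↔ p + τ⁻¹ • (x - y) ∈ subdiff lam f y := by
  refine and_congr proxObjective_ne_top_iff (forall_congr' fun z => ?_)
  have hquad : ‖y - x‖ ^ 2 / (2 * τ) + (⟪p, z - y⟫ + (lam + τ⁻¹) / 2 * ‖z - y‖ ^ 2)
      = ⟪p + τ⁻¹ • (x - y), z - y⟫ + lam / 2 * ‖z - y‖ ^ 2 + ‖z - x‖ ^ 2 / (2 * τ) := by
    rw [show z - x = (z - y) - (x - y) by abel, norm_sub_sq_real (z - y), inner_add_left,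
      real_inner_smul_left, real_inner_comm (z - y) (x - y),
      norm_sub_rev y x]
    ring
  rw [proxObjective, proxObjective, add_assoc, ← EReal.coe_add, hquad, EReal.coe_add (_ + _),
    ← add_assoc, (EReal.addLECancellable_coe _).add_le_add_iff_right]

theorem isResolvent_iff_zero_mem_subdiff_proxObjective :
    IsResolvent lam f τ J ↔ ∀ x, (0 : E) ∈ subdiff (lam + τ⁻¹) (proxObjective f τ x) (J x) := by
  simp only [IsResolvent, mem_subdiff_proxObjective_iff, zero_add]

theorem add_inv_pos_of_one_add_mul_pos (hτ : 0 < τ) (h : 0 < 1 + lam * τ) : 0 < lam + τ⁻¹ := by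
  rw [show lam + τ⁻¹ = (1 + lam * τ) / τ by field_simp; ring]
  positivity

theorem isResolvent_Jres [CompleteSpace E] (hf : ProperFn f) (hconv : LambdaConvex lam f)
    (hlsc : LowerSemicontinuous f) (hτ : 0 < τ) (h : 0 < 1 + lam * τ) :
    IsResolvent lam f τ (Jres f τ) := by
  refine isResolvent_iff_zero_mem_subdiff_proxObjective.2 fun x => ?_
  have hmin := (hconv.proxObjective (x := x)).exists_forall_le
    (add_inv_pos_of_one_add_mul_pos hτ h) hf.proxObjective
    (lowerSemicontinuous_proxObjective hlsc)
  refine hconv.proxObjective.zero_mem_subdiff hf.proxObjective ?_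
  rw [show Jres f τ x = hmin.choose from dif_pos hmin]
  exact hmin.choose_spec

namespace IsResolvent

theorem lipschitzWith (hJ : IsResolvent lam f τ J) (hf : ProperFn f) (hτ : 0 < τ)
    (h : 0 < 1 + lam * τ) : LipschitzWith (1 + lam * τ)⁻¹.toNNReal J := by
  refine LipschitzWith.of_dist_le_mul fun x y => ?_
  have := mul_norm_sub_le_of_mem_subdiff hf hτ (hJ x) (hJ y)
  simp only [smul_inv_smul₀ hτ.ne', add_sub_cancel] at this
  rwa [Real.coe_toNNReal _ (inv_nonneg.2 h.le), dist_eq_norm, dist_eq_norm, inv_mul_eq_div,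
    le_div_iff₀' h]

theorem apply_add_smul (hJ : IsResolvent lam f τ J) (hf : ProperFn f) (hτ : 0 < τ)
    (h : 0 < 1 + lam * τ) (hp : p ∈ subdiff lam f x) : J (x + τ • p) = x := by
  have := mul_norm_sub_le_of_mem_subdiff hf hτ (hJ (x + τ • p)) hp
  rw [smul_inv_smul₀ hτ.ne', add_sub_cancel, sub_self, norm_zero] at this
  exact sub_eq_zero.1 (norm_eq_zero.1 ((nonpos_of_mul_nonpos_right this h).antisymm
    (norm_nonneg _)))

theorem gradNorm_apply_le (hJ : IsResolvent lam f τ J) (hτ : 0 < τ) (x : E) :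
    gradNorm lam f (J x) ≤ ENNReal.ofReal (‖x - J x‖ / τ) := by
  refine (gradNorm_le_ofReal_norm (hJ x)).trans_eq ?_
  rw [norm_smul, norm_inv, Real.norm_of_nonneg hτ.le, inv_mul_eq_div]

theorem norm_sub_apply_div_le [CompleteSpace E] (hJ : IsResolvent lam f τ J) (hf : ProperFn f)
    (hτ : 0 < τ) (h : 0 < 1 + lam * τ) {K : ℝ≥0} (hK : LipschitzWith K J)
    (hx : gradNorm lam f x ≠ ⊤) :
    ENNReal.ofReal (‖x - J x‖ / τ) ≤ K * gradNorm lam f x := by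
  obtain ⟨p, hp, hpx⟩ := exists_mem_subdiff_gradNorm_eq hf hx
  rw [hpx, ← ENNReal.ofReal_coe_nnreal, ← ENNReal.ofReal_mul K.coe_nonneg]
  refine ENNReal.ofReal_le_ofReal ((div_le_iff₀ hτ).2 ?_)
  have := hK.norm_sub_le (x + τ • p) x
  rwa [hJ.apply_add_smul hf hτ h hp, add_sub_cancel_left, norm_smul, Real.norm_of_nonneg hτ.le,
    mul_comm τ, ← mul_assoc] at this

end IsResolvent

end Resolvent

section MoscoConvergence

variable {E : Type*} [NormedAddCommGroup E] [InnerProductSpace ℝ E]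
  {lam τ : ℝ} {fh : ℕ → E → EReal} {f : E → EReal}

theorem exists_subseq_tendsto_inner [CompleteSpace E] {u : ℕ → E}
    (hu : Bornology.IsBounded (range u)) :
    ∃ (z : E) (φ : ℕ → ℕ), StrictMono φ ∧
      ∀ p, Tendsto (fun k => ⟪u (φ k), p⟫) atTop (𝓝 ⟪z, p⟫) := by
  obtain ⟨R, hR⟩ := hu.exists_norm_le
  let M : Submodule ℝ E := (Submodule.span ℝ (range u)).topologicalClosure
  have : TopologicalSpace.SeparableSpace M := by
    have := ((countable_range u).isSeparable.span (R := ℝ)).closure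
    rw [← Submodule.topologicalClosure_coe] at this
    exact this.separableSpace
  have : CompleteSpace M :=
    (Submodule.isClosed_topologicalClosure (Submodule.span ℝ (range u))).completeSpace_coe
  let v : ℕ → M := fun n =>
    ⟨u n, (Submodule.span ℝ (range u)).le_topologicalClosure
      (Submodule.subset_span (mem_range_self n))⟩
  obtain ⟨ψ, -, φ, hφ, hlim⟩ := WeakDual.isSeqCompact_closedBall ℝ M 0 R
    (x := fun n => StrongDual.toWeakDual (InnerProductSpace.toDual ℝ M (v n))) fun n => by
      refine mem_closedBall_zero_iff.2 ?_
      exact ((InnerProductSpace.toDual ℝ M).norm_map (v n)).trans_le (hR _ (mem_range_self n))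
  refine ⟨(InnerProductSpace.toDual ℝ M).symm (WeakDual.toStrongDual ψ), φ, hφ, fun p => ?_⟩
  have hproj : ∀ w : M, ⟪(w : E), p⟫ = ⟪w, M.orthogonalProjectionOnto p⟫ := fun w =>
    (Submodule.inner_orthogonalProjectionOnto_eq_of_mem_left w p).symm
  rw [hproj, InnerProductSpace.toDual_symm_apply]
  exact (((WeakDual.eval_continuous (M.orthogonalProjectionOnto p)).tendsto ψ).comp hlim).congr
    fun k => (hproj (v (φ k))).symm

theorem Mosco.comp_strictMono (hM : Mosco fh f) {φ : ℕ → ℕ} (hφ : StrictMono φ) :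
    Mosco (fun k => fh (φ k)) f := by
  refine ⟨fun x => ?_, fun u z hu => ?_⟩
  · obtain ⟨u, hux, hlimsup⟩ := hM.1 x
    exact ⟨u ∘ φ, hux.comp hφ.tendsto_atTop,
      (hφ.tendsto_atTop.limsup_comp_le_limsup (u := fun h => fh h (u h))).trans hlimsup⟩
  · let v : ℕ → E := Function.extend φ u fun _ => z
    have hvφ : ∀ k, v (φ k) = u k := hφ.injective.extend_apply _ _
    have hv : ∀ p, Tendsto (fun h => ⟪v h, p⟫) atTop (𝓝 ⟪z, p⟫) := by
      intro p
      refine tendsto_def.2 fun s hs => ?_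
      obtain ⟨N, hN⟩ := eventually_atTop.1 ((hu p).eventually hs)
      refine eventually_atTop.2 ⟨φ N, fun h hh => ?_⟩
      by_cases hrange : ∃ k, φ k = h
      · obtain ⟨k, rfl⟩ := hrange
        exact (congrArg (⟪·, p⟫ ∈ s) (hvφ k)).mpr (hN k (hφ.le_iff_le.1 hh))
      · simpa only [mem_preimage, v, Function.extend_apply' _ _ _ hrange] using mem_of_mem_nhds hs
    refine (hM.2 v z hv).trans ?_
    simpa only [Function.comp_def, hvφ]
      using hφ.tendsto_atTop.liminf_le_liminf_comp (u := fun h => fh h (v h))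

theorem Mosco.proxObjective (hM : Mosco fh f) (hτ : 0 < τ) (x : E) :
    Mosco (fun h => proxObjective (fh h) τ x) (proxObjective f τ x) := by
  refine ⟨fun y => ?_, fun u z hu => ?_⟩
  · obtain ⟨u, huy, hlimsup⟩ := hM.1 y
    have hquad : limsup (fun h => ((‖u h - x‖ ^ 2 / (2 * τ) : ℝ) : EReal)) atTop
        = ((‖y - x‖ ^ 2 / (2 * τ) : ℝ) : EReal) :=
      ((continuous_coe_real_ereal.tendsto _).comp
        (((huy.sub_const x).norm.pow 2).div_const _)).limsup_eq
    refine ⟨u, huy, (EReal.limsup_add_le (Or.inr ?_) (Or.inr ?_)).trans ?_⟩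
    · exact hquad ▸ EReal.coe_ne_top _
    · exact hquad ▸ EReal.coe_ne_bot _
    · exact add_le_add hlimsup hquad.le
  · have hlower : Tendsto (fun h => (‖z - x‖ ^ 2 + 2 * (⟪u h, z - x⟫ - ⟪z, z - x⟫)) / (2 * τ))
        atTop (𝓝 (‖z - x‖ ^ 2 / (2 * τ))) := by
      have hinner := ((hu (z - x)).sub_const ⟪z, z - x⟫).const_mul 2
      simpa only [sub_self, mul_zero, add_zero]
        using (hinner.const_add (‖z - x‖ ^ 2)).div_const (2 * τ)
    have hquad : ((‖z - x‖ ^ 2 / (2 * τ) : ℝ) : EReal)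
        ≤ liminf (fun h => ((‖u h - x‖ ^ 2 / (2 * τ) : ℝ) : EReal)) atTop := by
      rw [← ((continuous_coe_real_ereal.tendsto _).comp hlower).liminf_eq]
      refine liminf_le_liminf (Eventually.of_forall fun h => EReal.coe_le_coe_iff.2 ?_)
      refine div_le_div_of_nonneg_right ?_ (by positivity)
      rw [show u h - x = (u h - z) + (z - x) by abel, norm_add_sq_real, inner_sub_left]
      linarith [sq_nonneg ‖u h - z‖]
    exact (add_le_add (hM.2 u z hu) hquad).trans EReal.le_liminf_add

theorem Mosco.tendsto_of_zero_mem_subdiff_of_tendsto_inner (hM : Mosco fh f) (hf : ProperFn f)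
    (hlam : 0 < lam) {u : ℕ → E} {y z : E} (hu : ∀ h, (0 : E) ∈ subdiff lam (fh h) (u h))
    (hy : (0 : E) ∈ subdiff lam f y)
    (huz : ∀ p, Tendsto (fun h => ⟪u h, p⟫) atTop (𝓝 ⟪z, p⟫)) : Tendsto u atTop (𝓝 y) := by
  obtain ⟨v, hvy, hlimsup⟩ := hM.1 y
  obtain ⟨a, ha⟩ : ∃ a : ℝ, (a : EReal) = f y := ⟨_, hf.coe_toReal hy.1⟩
  simp only [subdiff, mem_ofPred_eq, inner_zero_left, zero_add] at hu hy
  have hliminf : (a : EReal) ≤ liminf (fun h => fh h (u h)) atTop := by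
    refine le_trans ?_ ((hy.2 z).trans (hM.2 u z huz))
    rw [← ha, ← EReal.coe_add, EReal.coe_le_coe_iff]
    exact le_add_of_nonneg_right (by positivity)
  have hdiff : Tendsto (fun h => v h - u h) atTop (𝓝 0) := by
    refine Metric.tendsto_nhds.2 fun ε hε => ?_
    have hδ : 0 < lam / 4 * ε ^ 2 := by positivity
    filter_upwards [eventually_lt_of_lt_liminf
        ((EReal.coe_lt_coe_iff.2 (sub_lt_self a hδ)).trans_le hliminf),
      eventually_lt_of_limsup_lt
        ((hlimsup.trans_eq ha.symm).trans_lt (EReal.coe_lt_coe_iff.2 (lt_add_of_pos_right a hδ)))]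
      with h hlow hupp
    have hlt := ((add_le_add_left hlow.le _).trans ((hu h).2 (v h))).trans_lt hupp
    rw [← EReal.coe_add, EReal.coe_lt_coe_iff] at hlt
    rw [dist_zero_right]
    refine lt_of_pow_lt_pow_left₀ 2 hε.le (lt_of_mul_lt_mul_left (a := lam / 2) ?_ (by positivity))
    linarith
  simpa only [sub_sub_cancel, sub_zero] using hvy.sub hdiff

theorem Mosco.tendsto_of_zero_mem_subdiff [CompleteSpace E] (hM : Mosco fh f) (hf : ProperFn f)
    (hlam : 0 < lam) {u : ℕ → E} {y : E} (hu : ∀ h, (0 : E) ∈ subdiff lam (fh h) (u h))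
    (hy : (0 : E) ∈ subdiff lam f y) (hbdd : Bornology.IsBounded (range u)) :
    Tendsto u atTop (𝓝 y) := by
  refine tendsto_of_subseq_tendsto fun ns hns => ?_
  obtain ⟨φ, -, hφ⟩ := strictMono_subseq_of_tendsto_atTop hns
  obtain ⟨z, ψ, hψ, hz⟩ := exists_subseq_tendsto_inner
    (hbdd.subset (range_comp_subset_range (ns ∘ φ) u))
  exact ⟨φ ∘ ψ, (hM.comp_strictMono (hφ.comp hψ)).tendsto_of_zero_mem_subdiff_of_tendsto_inner
    hf hlam (fun k => hu _) hy hz⟩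

theorem Mosco.tendsto_resolvent [CompleteSpace E] (hM : Mosco fh f)
    (hfh : ∀ h, ProperFn (fh h)) (hf : ProperFn f) (hτ : 0 < τ) (hlam : 0 < 1 + lam * τ)
    {Jh : ℕ → E → E} {J : E → E} (hJh : ∀ h, IsResolvent lam (fh h) τ (Jh h))
    (hJ : IsResolvent lam f τ J) {a p : ℕ → E} (hp : ∀ h, p h ∈ subdiff lam (fh h) (a h))
    (ha : Bornology.IsBounded (range a)) (hpb : Bornology.IsBounded (range p)) (x : E) :
    Tendsto (fun h => Jh h x) atTop (𝓝 (J x)) := by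
  have hbdd : Bornology.IsBounded (range fun h => Jh h x) := by
    obtain ⟨A, hA⟩ := ha.exists_norm_le
    obtain ⟨P, hP⟩ := hpb.exists_norm_le
    refine isBounded_iff_forall_norm_le.2 ⟨(1 + lam * τ)⁻¹.toNNReal * (‖x‖ + A + τ * P) + A, ?_⟩
    rintro _ ⟨h, rfl⟩
    have hah := hA _ (mem_range_self h)
    have hph := hP _ (mem_range_self h)
    have hlip := ((hJh h).lipschitzWith (hfh h) hτ hlam).norm_sub_le x (a h + τ • p h)
    rw [(hJh h).apply_add_smul (hfh h) hτ hlam (hp h)] at hlip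
    have harg : ‖x - (a h + τ • p h)‖ ≤ ‖x‖ + A + τ * P := by
      rw [← sub_sub]
      refine (norm_sub_le_of_le (norm_sub_le_of_le le_rfl hah) ?_)
      rw [norm_smul, Real.norm_of_nonneg hτ.le]
      gcongr
    calc ‖Jh h x‖ ≤ ‖Jh h x - a h‖ + ‖a h‖ := norm_le_norm_sub_add _ _
      _ ≤ _ := by gcongr; exact hlip.trans (by gcongr)
  exact (hM.proxObjective hτ x).tendsto_of_zero_mem_subdiff hf.proxObjective
    (add_inv_pos_of_one_add_mul_pos hτ hlam)
    (fun h => isResolvent_iff_zero_mem_subdiff_proxObjective.1 (hJh h) x)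
    (isResolvent_iff_zero_mem_subdiff_proxObjective.1 hJ x) hbdd

end MoscoConvergence

section UniformConvergence

open scoped NNReal

theorem tendstoUniformlyOn_of_lipschitzWith {ι X Y : Type*} [PseudoMetricSpace X]
    [PseudoMetricSpace Y] {l : Filter ι} {F : ι → X → Y} {G : X → Y} {L : ℝ≥0} {D S : Set X}
    (hF : ∀ᶠ i in l, LipschitzWith L (F i)) (hG : LipschitzWith L G)
    (hFG : ∀ x ∈ D, Tendsto (F · x) l (𝓝 (G x))) (hS : IsCompact S) (hSD : S ⊆ closure D) :
    TendstoUniformlyOn F G l S := by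
  rw [Metric.tendstoUniformlyOn_iff]
  intro ε hε
  set δ : ℝ := ε / (2 * (2 * L + 1)) with hδ
  have hδ0 : 0 < δ := by positivity
  have hcover : S ⊆ ⋃ x ∈ D, Metric.ball x δ := fun y hy => by
    obtain ⟨x, hx, hyx⟩ := Metric.mem_closure_iff.1 (hSD hy) δ hδ0
    exact mem_biUnion hx hyx
  obtain ⟨T, hTD, hT, hST⟩ := hS.elim_finite_subcover_image (fun _ _ => Metric.isOpen_ball) hcover
  have hnear : ∀ᶠ i in l, ∀ x ∈ T, dist (G x) (F i x) < ε / 2 :=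
    (Filter.eventually_all_finite hT).2 fun x hx => by
      filter_upwards [Metric.tendsto_nhds.1 (hFG x (hTD hx)) (ε / 2) (by positivity)] with i hi
      rwa [dist_comm]
  filter_upwards [hF, hnear] with i hi hnear y hy
  obtain ⟨x, hxT, hyx⟩ := mem_iUnion₂.1 (hST hy)
  calc dist (G y) (F i y)
      ≤ dist (G y) (G x) + dist (G x) (F i x) + dist (F i x) (F i y) := dist_triangle4 _ _ _ _
    _ ≤ L * δ + dist (G x) (F i x) + L * δ := by
        gcongr
        · exact hG.dist_le_mul_of_le hyx.le
        · exact hi.dist_le_mul_of_le (by rw [dist_comm]; exact hyx.le)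
    _ < L * δ + ε / 2 + L * δ := by gcongr; exact hnear x hxT
    _ ≤ (2 * L + 1) * δ + ε / 2 := by linarith
    _ = ε := by rw [hδ]; field_simp; ring

theorem Icc_subset_closure_of_lintegral_ne_top {G : ℝ → ℝ≥0∞} {a b : ℝ} (hab : a < b)
    (hG : ∫⁻ t in Ioc a b, G t ≠ ⊤) : Icc a b ⊆ closure {t ∈ Icc a b | G t ≠ ⊤} := by
  nth_rw 1 [← closure_Ioo hab.ne]
  refine closure_minimal (fun t ht => mem_closure_iff.2 fun U hU htU => ?_) isClosed_closure
  by_contra hne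
  have htop : ∀ s ∈ U ∩ Ioo a b, G s = ⊤ := fun s hs => by
    by_contra hs'
    exact hne ⟨s, hs.1, Ioo_subset_Icc_self hs.2, hs'⟩
  have hpos : volume (U ∩ Ioo a b) ≠ 0 :=
    (hU.inter isOpen_Ioo).measure_ne_zero volume ⟨t, htU, ht⟩
  refine hG (top_le_iff.1 ?_)
  calc (⊤ : ℝ≥0∞) = ∫⁻ _ in U ∩ Ioo a b, ⊤ := by rw [setLIntegral_const, ENNReal.top_mul hpos]
    _ = ∫⁻ s in U ∩ Ioo a b, G s :=
        setLIntegral_congr_fun (hU.inter isOpen_Ioo).measurableSet fun s hs => (htop s hs).symm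
    _ ≤ ∫⁻ s in Ioc a b, G s :=
        lintegral_mono_set (inter_subset_right.trans Ioo_subset_Ioc_self)

variable {E : Type*} [NormedAddCommGroup E] [InnerProductSpace ℝ E] [CompleteSpace E]
  {lam : ℝ} {f : E → EReal}

theorem tendsto_inv_one_add_mul_nhdsGT (lam : ℝ) :
    Tendsto (fun τ => (1 + lam * τ)⁻¹) (𝓝[>] 0) (𝓝 1) := by
  have h : ContinuousAt (fun τ : ℝ => (1 + lam * τ)⁻¹) 0 := by
    refine ContinuousAt.inv₀ (by fun_prop) (by norm_num)
  simpa only [mul_zero, add_zero, inv_one] using h.tendsto.mono_left nhdsWithin_le_nhds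

theorem eventually_one_add_mul_pos (lam : ℝ) : ∀ᶠ τ : ℝ in 𝓝[>] 0, 0 < 1 + lam * τ := by
  filter_upwards [(tendsto_inv_one_add_mul_nhdsGT lam).eventually_const_lt one_pos] with τ hτ
  exact inv_pos.1 hτ

theorem eventually_lipschitzWith_Jres (hf : ProperFn f) (hconv : LambdaConvex lam f)
    (hlsc : LowerSemicontinuous f) : ∀ᶠ τ in 𝓝[>] 0, LipschitzWith 2 (Jres f τ) := by
  filter_upwards [eventually_one_add_mul_pos lam, self_mem_nhdsWithin,
    (tendsto_inv_one_add_mul_nhdsGT lam).eventually_le_const one_lt_two] with τ hpos hτ hle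
  refine ((isResolvent_Jres hf hconv hlsc hτ hpos).lipschitzWith hf hτ hpos).weaken ?_
  exact Real.toNNReal_le_iff_le_coe.2 hle

theorem tendsto_Jres (hf : ProperFn f) (hconv : LambdaConvex lam f) (hlsc : LowerSemicontinuous f)
    {x : E} (hx : gradNorm lam f x ≠ ⊤) : Tendsto (Jres f · x) (𝓝[>] 0) (𝓝 x) := by
  obtain ⟨p, hp, -⟩ := exists_mem_subdiff_gradNorm_eq hf hx
  refine tendsto_iff_norm_sub_tendsto_zero.2 (squeeze_zero' (Eventually.of_forall fun _ =>
    norm_nonneg _) ?_ (g := fun τ : ℝ => 2 * (τ * ‖p‖)) ?_)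
  · filter_upwards [eventually_lipschitzWith_Jres hf hconv hlsc, eventually_one_add_mul_pos lam,
      self_mem_nhdsWithin] with τ hL hpos hτ
    have hJ := (isResolvent_Jres hf hconv hlsc hτ hpos).apply_add_smul hf hτ hpos hp
    calc ‖Jres f τ x - x‖ = ‖Jres f τ x - Jres f τ (x + τ • p)‖ := by rw [hJ]
      _ ≤ 2 * ‖x - (x + τ • p)‖ := hL.norm_sub_le _ _
      _ = 2 * (τ * ‖p‖) := by
        rw [sub_add_cancel_left, norm_neg, norm_smul, Real.norm_of_nonneg (le_of_lt hτ)]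
  · have h : Tendsto (fun τ : ℝ => 2 * (τ * ‖p‖)) (𝓝 0) (𝓝 (2 * (0 * ‖p‖))) :=
      Continuous.tendsto (by fun_prop) 0
    rw [zero_mul, mul_zero] at h
    exact h.mono_left nhdsWithin_le_nhds

theorem tendstoUniformlyOn_Jres (hf : ProperFn f) (hconv : LambdaConvex lam f)
    (hlsc : LowerSemicontinuous f) {S : Set E} (hS : IsCompact S)
    (hSf : S ⊆ closure {x | gradNorm lam f x ≠ ⊤}) :
    TendstoUniformlyOn (Jres f) id (𝓝[>] 0) S :=
  tendstoUniformlyOn_of_lipschitzWith (eventually_lipschitzWith_Jres hf hconv hlsc)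
    (LipschitzWith.id.weaken one_le_two) (fun _ => tendsto_Jres hf hconv hlsc) hS hSf

end UniformConvergence

section Velocity

open scoped NNReal

variable {E : Type*} [NormedAddCommGroup E]

section NormedSpace

variable [NormedSpace ℝ E] {γ γ₁ γ₂ g g₁ g₂ : ℝ → E} {a b : ℝ}

/-- `γ` is absolutely continuous on `[a, b]` with velocity `g`, so that `IsACCurve a b γ` means
`∃ g, HasVelocityOn γ g a b`. -/
def HasVelocityOn (γ g : ℝ → E) (a b : ℝ) : Prop :=
  IntegrableOn g (Icc a b) ∧ ∀ t ∈ Icc a b, γ t = γ a + ∫ s in a..t, g s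

theorem HasVelocityOn.intervalIntegrable (h : HasVelocityOn γ g a b) {s t : ℝ}
    (hs : s ∈ Icc a b) (ht : t ∈ Icc a b) : IntervalIntegrable g volume s t :=
  (h.1.mono_set (uIcc_subset_Icc hs ht)).intervalIntegrable

theorem HasVelocityOn.congr (h : HasVelocityOn γ₁ g a b) (hγ : EqOn γ₁ γ₂ (Icc a b)) :
    HasVelocityOn γ₂ g a b := by
  refine ⟨h.1, fun t ht => ?_⟩
  rw [← hγ ht, ← hγ (left_mem_Icc.2 (ht.1.trans ht.2)), h.2 t ht]

theorem HasVelocityOn.add (h₁ : HasVelocityOn γ₁ g₁ a b) (h₂ : HasVelocityOn γ₂ g₂ a b) :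
    HasVelocityOn (γ₁ + γ₂) (g₁ + g₂) a b := by
  refine ⟨h₁.1.add h₂.1, fun t ht => ?_⟩
  have ha : a ∈ Icc a b := left_mem_Icc.2 (ht.1.trans ht.2)
  simp only [Pi.add_apply]
  rw [intervalIntegral.integral_add (h₁.intervalIntegrable ha ht) (h₂.intervalIntegrable ha ht),
    h₁.2 t ht, h₂.2 t ht]
  abel

theorem HasVelocityOn.exists_integrable_eqOn (h : HasVelocityOn γ g a b) :
    ∃ G, Integrable G ∧ EqOn (fun t => γ a + ∫ s in a..t, G s) γ (Icc a b) ∧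
      ∫⁻ r, ‖G r‖ₑ ^ 2 = ∫⁻ r in Ioc a b, ‖g r‖ₑ ^ 2 := by
  refine ⟨(Ioc a b).indicator g, ?_, fun t ht => ?_, ?_⟩
  · exact (h.1.mono_set Ioc_subset_Icc_self).integrable_indicator measurableSet_Ioc
  · rw [h.2 t ht]
    simp only [intervalIntegral.integral_of_le ht.1, setIntegral_indicator measurableSet_Ioc,
      inter_eq_left.2 (Ioc_subset_Ioc_right ht.2)]
  · rw [← lintegral_indicator measurableSet_Ioc]
    refine lintegral_congr fun r => ?_
    by_cases hr : r ∈ Ioc a b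
    · simp only [indicator_of_mem hr]
    · simp only [indicator_of_notMem hr, enorm_zero, zero_pow two_ne_zero]

theorem HasVelocityOn.continuousOn (h : HasVelocityOn γ g a b) : ContinuousOn γ (Icc a b) :=
  (continuousOn_const.add (intervalIntegral.continuousOn_primitive_Icc h.1)).congr
    fun t ht => by
      rw [h.2 t ht, intervalIntegral.integral_of_le ht.1, Pi.add_apply,
        integral_Icc_eq_integral_Ioc]

variable [CompleteSpace E]

theorem HasVelocityOn.ae_hasDerivAt (h : HasVelocityOn γ g a b) :
    ∀ᵐ t ∂volume.restrict (Ioc a b), HasDerivAt γ (g t) t := by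
  rcases le_or_gt b a with hba | hab
  · rw [Ioc_eq_empty hba.not_gt, Measure.restrict_empty, ae_zero]
    exact eventually_bot
  rw [← restrict_Ioo_eq_restrict_Ioc, ae_restrict_iff' measurableSet_Ioo]
  have ha : a ∈ uIcc a b := left_mem_uIcc
  have hint := h.intervalIntegrable (left_mem_Icc.2 hab.le) (right_mem_Icc.2 hab.le)
  filter_upwards [hint.ae_hasDerivAt_integral] with t hderiv ht
  have ht' : t ∈ uIcc a b := by
    rw [uIcc_of_le hab.le]
    exact Ioo_subset_Icc_self ht
  refine ((hderiv ht' a ha).const_add (γ a)).congr_of_eventuallyEq ?_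
  filter_upwards [isOpen_Ioo.mem_nhds ht] with s hs
  exact h.2 s (Ioo_subset_Icc_self hs)

theorem HasVelocityOn.ae_eq (h₁ : HasVelocityOn γ g₁ a b) (h₂ : HasVelocityOn γ g₂ a b) :
    g₁ =ᵐ[volume.restrict (Ioc a b)] g₂ := by
  filter_upwards [h₁.ae_hasDerivAt, h₂.ae_hasDerivAt] with t ht₁ ht₂ using ht₁.unique ht₂

theorem HasVelocityOn.ae_enorm_comp_le {J : E → E} {K : ℝ≥0} {v : ℝ → E}
    (hJ : LipschitzWith K J) (hγ : HasVelocityOn γ g a b) (hv : HasVelocityOn (J ∘ γ) v a b) :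
    ∀ᵐ t ∂volume.restrict (Ioc a b), ‖v t‖ₑ ≤ K * ‖g t‖ₑ := by
  filter_upwards [hγ.ae_hasDerivAt, hv.ae_hasDerivAt] with t hg hv
  have hslope : ∀ s, ‖slope (J ∘ γ) t s‖ ≤ K * ‖slope γ t s‖ := fun s => by
    simp only [slope_def_module, norm_smul, Function.comp_apply]
    rw [mul_left_comm]
    gcongr
    exact hJ.norm_sub_le _ _
  have hle : ‖v t‖ ≤ K * ‖g t‖ := le_of_tendsto_of_tendsto' hv.tendsto_slope.norm
    (hg.tendsto_slope.norm.const_mul _) hslope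
  simpa only [enorm, ← ENNReal.coe_mul, ENNReal.coe_le_coe] using
    (NNReal.coe_le_coe.1 hle : ‖v t‖₊ ≤ K * ‖g t‖₊)

end NormedSpace

theorem sq_lintegral_le {α : Type*} [MeasurableSpace α] {μ : Measure α} {F : α → ℝ≥0∞}
    (hF : AEMeasurable F μ) : (∫⁻ x, F x ∂μ) ^ 2 ≤ μ univ * ∫⁻ x, F x ^ 2 ∂μ := by
  have h := ENNReal.lintegral_mul_le_Lp_mul_Lq μ Real.HolderConjugate.two_two
    (f := fun _ => 1) (g := F) aemeasurable_const hF
  simp only [Pi.mul_apply, one_mul, ENNReal.rpow_two, one_pow, lintegral_one] at h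
  refine (pow_le_pow_left' h 2).trans_eq ?_
  rw [mul_pow, ← ENNReal.rpow_mul_natCast, ← ENNReal.rpow_mul_natCast]
  norm_num

theorem lintegral_sq_setLIntegral_Ioc_le {G : ℝ → ℝ≥0∞} (hG : AEMeasurable G) (ε : ℝ) :
    ∫⁻ s, (∫⁻ r in Ioc s (s + ε), G r) ^ 2 ≤ ENNReal.ofReal ε ^ 2 * ∫⁻ r, G r ^ 2 := by
  set G' := hG.mk G
  have hGG' : G =ᵐ[volume] G' := hG.ae_eq_mk
  have hmeas : Measurable fun q : ℝ × ℝ => G' (q.1 + q.2) ^ 2 :=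
    (hG.measurable_mk.comp measurable_add).pow_const 2
  have hshift : ∀ s, ∫⁻ r in Ioc s (s + ε), G r ^ 2 = ∫⁻ r in Ioc 0 ε, G' (s + r) ^ 2 := fun s => by
    rw [lintegral_congr_ae (ae_restrict_of_ae (hGG'.mono fun r hr => congrArg (· ^ 2) hr)),
      ← (measurePreserving_add_left volume s).setLIntegral_comp_preimage_emb
        (measurableEmbedding_addLeft s), preimage_const_add_Ioc, sub_self, add_sub_cancel_left]
  calc ∫⁻ s, (∫⁻ r in Ioc s (s + ε), G r) ^ 2
      ≤ ∫⁻ s, ENNReal.ofReal ε * ∫⁻ r in Ioc s (s + ε), G r ^ 2 := by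
        refine lintegral_mono fun s => (sq_lintegral_le hG.restrict).trans_eq ?_
        rw [Measure.restrict_apply_univ, Real.volume_Ioc, add_sub_cancel_left]
    _ = ENNReal.ofReal ε * ∫⁻ s, ∫⁻ r in Ioc 0 ε, G' (s + r) ^ 2 := by
        rw [lintegral_const_mul' _ _ ENNReal.ofReal_ne_top]
        simp only [hshift]
    _ = ENNReal.ofReal ε * ∫⁻ r in Ioc 0 ε, ∫⁻ s, G' (s + r) ^ 2 := by
        rw [lintegral_lintegral_swap hmeas.aemeasurable]
    _ = ENNReal.ofReal ε * ∫⁻ _ in Ioc 0 ε, ∫⁻ r, G r ^ 2 := by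
        have hfull : ∀ r, ∫⁻ s, G' (s + r) ^ 2 = ∫⁻ s, G s ^ 2 := fun r => by
          rw [lintegral_add_right_eq_self (fun s => G' s ^ 2) r]
          exact lintegral_congr_ae (hGG'.mono fun s hs => congrArg (· ^ 2) hs.symm)
        simp only [hfull]
    _ = ENNReal.ofReal ε ^ 2 * ∫⁻ r, G r ^ 2 := by
        rw [setLIntegral_const, Real.volume_Ioc, sub_zero, sq]
        ring

theorem lintegral_enorm_slope_integral_sq_le [NormedSpace ℝ E] {G : ℝ → E} (hG : Integrable G)
    {ε : ℝ} (hε : 0 < ε) (a : ℝ) :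
    ∫⁻ s, ‖ε⁻¹ • ((∫ r in a..s + ε, G r) - ∫ r in a..s, G r)‖ₑ ^ 2 ≤ ∫⁻ r, ‖G r‖ₑ ^ 2 := by
  have hpoint : ∀ s, ‖ε⁻¹ • ((∫ r in a..s + ε, G r) - ∫ r in a..s, G r)‖ₑ ^ 2 ≤
      ENNReal.ofReal ε⁻¹ ^ 2 * (∫⁻ r in Ioc s (s + ε), ‖G r‖ₑ) ^ 2 := fun s => by
    rw [intervalIntegral.integral_interval_sub_left hG.intervalIntegrable hG.intervalIntegrable,
      intervalIntegral.integral_of_le (by linarith), enorm_smul, mul_pow,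
      Real.enorm_of_nonneg (by positivity)]
    gcongr
    exact enorm_integral_le_lintegral_enorm _
  calc ∫⁻ s, ‖ε⁻¹ • ((∫ r in a..s + ε, G r) - ∫ r in a..s, G r)‖ₑ ^ 2
      ≤ ∫⁻ s, ENNReal.ofReal ε⁻¹ ^ 2 * (∫⁻ r in Ioc s (s + ε), ‖G r‖ₑ) ^ 2 :=
        lintegral_mono hpoint
    _ ≤ ENNReal.ofReal ε⁻¹ ^ 2 * (ENNReal.ofReal ε ^ 2 * ∫⁻ r, ‖G r‖ₑ ^ 2) := by
        rw [lintegral_const_mul' _ _ (by finiteness)]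
        gcongr
        exact lintegral_sq_setLIntegral_Ioc_le hG.aestronglyMeasurable.enorm ε
    _ = ∫⁻ r, ‖G r‖ₑ ^ 2 := by
        rw [← mul_assoc, ← mul_pow, ← ENNReal.ofReal_mul (by positivity), inv_mul_cancel₀ hε.ne',
          ENNReal.ofReal_one, one_pow, one_mul]

theorem tendsto_integral_slope [NormedSpace ℝ E] [CompleteSpace E] {u : ℝ → E}
    (hu : Continuous u) (a t : ℝ) :
    Tendsto (fun ε => ∫ s in a..t, ε⁻¹ • (u (s + ε) - u s)) (𝓝[≠] 0) (𝓝 (u t - u a)) := by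
  have hint : ∀ x y, IntervalIntegrable u volume x y := hu.intervalIntegrable
  have hderiv : ∀ x, HasDerivAt (fun x => ∫ s in a..x, u s) (u x) x := fun x =>
    intervalIntegral.integral_hasDerivAt_right (hint a x) (hu.stronglyMeasurableAtFilter _ _)
      hu.continuousAt
  refine ((hderiv t).tendsto_slope_zero.sub (hderiv a).tendsto_slope_zero).congr fun ε => ?_
  have hshift : IntervalIntegrable (fun s => u (s + ε)) volume a t :=
    (hu.comp (continuous_add_const ε)).intervalIntegrable a t
  rw [intervalIntegral.integral_smul, intervalIntegral.integral_sub hshift (hint a t),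
    intervalIntegral.integral_comp_add_right, ← smul_sub,
    ← intervalIntegral.integral_interval_sub_left (hint a (t + ε)) (hint a (a + ε)),
    intervalIntegral.integral_same]
  congr 1
  abel

theorem eLpNorm_two_sq {α : Type*} [MeasurableSpace α] {μ : Measure α} (F : α → E) :
    eLpNorm F 2 μ ^ 2 = ∫⁻ x, ‖F x‖ₑ ^ 2 ∂μ := by
  simpa only [NNReal.coe_ofNat, ENNReal.rpow_two, ENNReal.coe_ofNat] using
    eLpNorm_nnreal_pow_eq_lintegral (f := F) (μ := μ) (p := 2) two_ne_zero

variable [InnerProductSpace ℝ E] [CompleteSpace E] {γ g : ℝ → E} {a b : ℝ}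

theorem exists_subseq_tendsto_inner_setIntegral {α : Type*} [MeasurableSpace α] {μ : Measure α}
    [IsFiniteMeasure μ] {D : ℕ → α → E} (hD : ∀ n, AEStronglyMeasurable (D n) μ) {M : ℝ≥0∞}
    (hM : M ≠ ⊤) (hDM : ∀ n, ∫⁻ x, ‖D n x‖ₑ ^ 2 ∂μ ≤ M) :
    ∃ (F : α → E) (φ : ℕ → ℕ), Integrable F μ ∧ StrictMono φ ∧
      ∀ S, MeasurableSet S → ∀ c, Tendsto (fun k => ⟪c, ∫ x in S, D (φ k) x ∂μ⟫) atTop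
        (𝓝 ⟪c, ∫ x in S, F x ∂μ⟫) := by
  have hmem : ∀ n, MemLp (D n) 2 μ := fun n => ⟨hD n, by
    refine (ENNReal.pow_lt_top_iff (n := 2)).1 ?_ |>.resolve_right two_ne_zero
    rw [eLpNorm_two_sq]
    exact (hDM n).trans_lt hM.lt_top⟩
  have hbdd : Bornology.IsBounded (range fun n => (hmem n).toLp (D n)) := by
    refine isBounded_iff_forall_norm_le.2 ⟨√M.toReal, forall_mem_range.2 fun n => ?_⟩
    rw [Lp.norm_toLp]
    refine Real.le_sqrt_of_sq_le ?_
    rw [← ENNReal.toReal_pow, eLpNorm_two_sq]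
    exact ENNReal.toReal_mono hM (hDM n)
  obtain ⟨F, φ, hφ, hF⟩ := exists_subseq_tendsto_inner hbdd
  refine ⟨F, φ, (Lp.memLp F).integrable one_le_two, hφ, fun S hS c => ?_⟩
  have hlim := hF (indicatorConstLp 2 hS (measure_ne_top μ S) c)
  simp only [real_inner_comm (indicatorConstLp 2 hS (measure_ne_top μ S) c),
    L2.inner_indicatorConstLp_eq_inner_setIntegral] at hlim
  refine hlim.congr fun k => ?_
  rw [integral_congr_ae (ae_restrict_of_ae (hmem (φ k)).coeFn_toLp)]

theorem exists_hasVelocityOn_of_lintegral_slope_le {u : ℝ → E} (hu : Continuous u) {M : ℝ≥0∞}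
    (hM : M ≠ ⊤)
    (hslope : ∀ ε > 0, ∫⁻ s in Ioc a b, ‖ε⁻¹ • (u (s + ε) - u s)‖ₑ ^ 2 ≤ M) :
    ∃ v, HasVelocityOn u v a b := by
  obtain ⟨e, he⟩ := exists_seq_tendsto (𝓝[>] (0 : ℝ))
  obtain ⟨N, hN⟩ := eventually_atTop.1 (he.eventually self_mem_nhdsWithin)
  obtain ⟨v, φ, hv, hφ, hlim⟩ := exists_subseq_tendsto_inner_setIntegral
    (μ := volume.restrict (Ioc a b))
    (D := fun n s => (e (n + N))⁻¹ • (u (s + e (n + N)) - u s))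
    (fun n => Continuous.aestronglyMeasurable (by fun_prop)) hM
    (fun n => hslope _ (hN _ (Nat.le_add_left N n)))
  refine ⟨v, (integrableOn_Icc_iff_integrableOn_Ioc (by finiteness)).2 hv, fun t ht => ?_⟩
  have hφe : Tendsto (fun k => e (φ k + N)) atTop (𝓝[≠] 0) :=
    (he.mono_right (nhdsGT_le_nhdsNE 0)).comp
      ((tendsto_add_atTop_nat N).comp hφ.tendsto_atTop)
  have hres : (volume.restrict (Ioc a b)).restrict (Ioc a t) = volume.restrict (Ioc a t) :=
    Measure.restrict_restrict_of_subset (Ioc_subset_Ioc_right ht.2)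
  rw [← sub_eq_iff_eq_add']
  refine ext_inner_left ℝ fun c => tendsto_nhds_unique
    (tendsto_const_nhds.inner ((tendsto_integral_slope hu a t).comp hφe)) ?_
  simpa only [hres, intervalIntegral.integral_of_le ht.1, Function.comp_apply] using
    hlim (Ioc a t) measurableSet_Ioc c

theorem HasVelocityOn.exists_comp {J : E → E} {K : ℝ≥0} (hJ : LipschitzWith K J)
    (h : HasVelocityOn γ g a b) (hg : ∫⁻ t in Ioc a b, ‖g t‖ₑ ^ 2 ≠ ⊤) :
    ∃ v, HasVelocityOn (J ∘ γ) v a b := by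
  obtain ⟨G, hG, hγ, hGg⟩ := h.exists_integrable_eqOn
  set γ' : ℝ → E := fun t => γ a + ∫ s in a..t, G s
  have hcont : Continuous (J ∘ γ') := hJ.continuous.comp (continuous_const.add
    (intervalIntegral.continuous_primitive (fun _ _ => hG.intervalIntegrable) a))
  have hslope : ∀ ε s, ‖ε⁻¹ • ((J ∘ γ') (s + ε) - (J ∘ γ') s)‖ₑ ≤
      K * ‖ε⁻¹ • ((∫ r in a..s + ε, G r) - ∫ r in a..s, G r)‖ₑ := fun ε s => by
    rw [enorm_smul, enorm_smul, mul_left_comm,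
      ← add_sub_add_left_eq_sub (∫ r in a..s + ε, G r) _ (γ a)]
    gcongr
    rw [← edist_eq_enorm_sub, ← edist_eq_enorm_sub]
    exact hJ _ _
  obtain ⟨v, hv⟩ := exists_hasVelocityOn_of_lintegral_slope_le (a := a) (b := b) hcont
    (M := K ^ 2 * ∫⁻ t in Ioc a b, ‖g t‖ₑ ^ 2) (by finiteness) fun ε hε => by
      calc ∫⁻ s in Ioc a b, ‖ε⁻¹ • ((J ∘ γ') (s + ε) - (J ∘ γ') s)‖ₑ ^ 2
          ≤ ∫⁻ s, K ^ 2 * ‖ε⁻¹ • ((∫ r in a..s + ε, G r) - ∫ r in a..s, G r)‖ₑ ^ 2 := by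
            refine (setLIntegral_le_lintegral _ _).trans (lintegral_mono fun s => ?_)
            rw [← mul_pow]
            exact pow_le_pow_left' (hslope ε s) 2
        _ ≤ K ^ 2 * ∫⁻ t in Ioc a b, ‖g t‖ₑ ^ 2 := by
            rw [lintegral_const_mul' _ _ (by finiteness), ← hGg]
            exact mul_le_mul_right (lintegral_enorm_slope_integral_sq_le hG hε a) _
  exact ⟨v, hv.congr fun t ht => congrArg J (hγ ht)⟩

theorem HasVelocityOn.actionFn_eq (h : HasVelocityOn γ g a b) (lam : ℝ) (f : E → EReal) :
    actionFn lam f a b γ = ∫⁻ t in Ioc a b, (‖g t‖ₑ ^ 2 + gradNorm lam f (γ t) ^ 2) := by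
  have hac : IsACCurve a b γ := ⟨g, h⟩
  have hchoose : HasVelocityOn γ hac.choose a b := hac.choose_spec
  unfold actionFn
  rw [dif_pos hac]
  refine lintegral_congr_ae ?_
  filter_upwards [hchoose.ae_eq h] with t ht
  rw [ht, ENNReal.ofReal_pow (norm_nonneg _), ofReal_norm]

end Velocity

section EndpointCorrection

variable {E : Type*} [NormedAddCommGroup E] [NormedSpace ℝ E] {τ C t : ℝ} {e₀ e₁ : E}

/-- Layers of width `τ` at the two ends of the time interval `[0, 1]`. -/
def endpointLayer (τ : ℝ) : Set ℝ := Ioc 0 τ ∪ Ioc (1 - τ) 1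

/-- The curve running affinely from `e₀` to `0` and then from `0` to `e₁` across the two endpoint
layers; adding it to a curve on `[0, 1]` shifts the endpoints by `e₀` and `e₁`. -/
def endpointCorrection (τ : ℝ) (e₀ e₁ : E) (t : ℝ) : E :=
  (1 - max 0 (min t τ) / τ) • e₀ + ((max (1 - τ) (min t 1) - (1 - τ)) / τ) • e₁

/-- The velocity of `endpointCorrection`. -/
def endpointVelocity (τ : ℝ) (e₀ e₁ : E) : ℝ → E :=
  ((Ioc 0 τ).indicator fun _ => -(τ⁻¹ • e₀)) + (Ioc (1 - τ) 1).indicator fun _ => τ⁻¹ • e₁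

theorem measurableSet_endpointLayer (τ : ℝ) : MeasurableSet (endpointLayer τ) :=
  measurableSet_Ioc.union measurableSet_Ioc

theorem volume_endpointLayer_le (τ : ℝ) : volume (endpointLayer τ) ≤ 2 * ENNReal.ofReal τ := by
  refine (measure_union_le _ _).trans_eq ?_
  rw [Real.volume_Ioc, Real.volume_Ioc, sub_zero, sub_sub_cancel, two_mul]

theorem endpointCorrection_zero (hτ : 0 < τ) (hτ1 : τ ≤ 1) (e₀ e₁ : E) :
    endpointCorrection τ e₀ e₁ 0 = e₀ := by
  rw [endpointCorrection, min_eq_left hτ.le, max_self, min_eq_left zero_le_one,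
    max_eq_left (sub_nonneg.2 hτ1), zero_div, sub_zero, one_smul, sub_self, zero_div, zero_smul,
    add_zero]

theorem endpointCorrection_one (hτ : 0 < τ) (hτ1 : τ ≤ 1) (e₀ e₁ : E) :
    endpointCorrection τ e₀ e₁ 1 = e₁ := by
  rw [endpointCorrection, min_eq_right hτ1, max_eq_right hτ.le, div_self hτ.ne', sub_self,
    zero_smul, min_self, max_eq_right (by linarith), sub_sub_cancel, div_self hτ.ne', one_smul,
    zero_add]

theorem norm_endpointCorrection_le (hτ : 0 < τ) (he₀ : ‖e₀‖ ≤ τ * C) (he₁ : ‖e₁‖ ≤ τ * C) (t : ℝ) :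
    ‖endpointCorrection τ e₀ e₁ t‖ ≤ 2 * (τ * C) := by
  have hle : ∀ {w : ℝ} {e : E}, 0 ≤ w → w ≤ 1 → ‖e‖ ≤ τ * C → ‖w • e‖ ≤ τ * C :=
    fun hw0 hw1 he => by
      rw [norm_smul, Real.norm_of_nonneg hw0]
      exact (mul_le_of_le_one_left (norm_nonneg _) hw1).trans he
  rw [two_mul]
  refine (norm_add_le _ _).trans (add_le_add (hle ?_ ?_ he₀) (hle ?_ ?_ he₁))
  · rw [sub_nonneg, div_le_one hτ]
    exact max_le hτ.le (min_le_right _ _)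
  · exact sub_le_self _ (div_nonneg (le_max_left _ _) hτ.le)
  · exact div_nonneg (sub_nonneg.2 (le_max_left _ _)) hτ.le
  · rw [div_le_one hτ, sub_le_iff_le_add, add_sub_cancel]
    exact max_le (sub_le_self 1 hτ.le) (min_le_right _ _)

theorem endpointCorrection_eq_zero (hτ : 0 < τ) (ht : t ∈ Ioc (0 : ℝ) 1)
    (htτ : t ∉ endpointLayer τ) : endpointCorrection τ e₀ e₁ t = 0 := by
  rw [endpointLayer, mem_union, not_or] at htτ
  have hleft : τ ≤ t := (lt_of_not_ge fun h => htτ.1 ⟨ht.1, h⟩).le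
  have hright : t ≤ 1 - τ := le_of_not_gt fun h => htτ.2 ⟨h, ht.2⟩
  rw [endpointCorrection, min_eq_right hleft, max_eq_right hτ.le, div_self hτ.ne', sub_self,
    zero_smul, min_eq_left ht.2, max_eq_left hright, sub_self, zero_div, zero_smul, add_zero]

theorem enorm_endpointCorrection_le (hτ : 0 < τ) (he₀ : ‖e₀‖ ≤ τ * C) (he₁ : ‖e₁‖ ≤ τ * C)
    (ht : t ∈ Ioc (0 : ℝ) 1) : ‖endpointCorrection τ e₀ e₁ t‖ₑ ≤
      ENNReal.ofReal τ * (endpointLayer τ).indicator (fun _ => ENNReal.ofReal (2 * C)) t := by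
  by_cases htτ : t ∈ endpointLayer τ
  · rw [indicator_of_mem htτ, ← ENNReal.ofReal_mul hτ.le, ← ofReal_norm]
    exact ENNReal.ofReal_le_ofReal
      ((norm_endpointCorrection_le hτ he₀ he₁ t).trans_eq (mul_left_comm _ _ _))
  · rw [endpointCorrection_eq_zero hτ ht htτ, enorm_zero]
    exact zero_le

theorem enorm_endpointVelocity_le (hτ : 0 < τ) (he₀ : ‖e₀‖ ≤ τ * C) (he₁ : ‖e₁‖ ≤ τ * C) (t : ℝ) :
    ‖endpointVelocity τ e₀ e₁ t‖ₑ ≤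
      (endpointLayer τ).indicator (fun _ => ENNReal.ofReal (2 * C)) t := by
  have hC : ∀ {e : E}, ‖e‖ ≤ τ * C → ‖τ⁻¹ • e‖ ≤ C := fun he => by
    rwa [norm_smul, Real.norm_of_nonneg (by positivity), inv_mul_le_iff₀ hτ]
  rw [endpointVelocity, Pi.add_apply, ← ofReal_norm]
  by_cases htτ : t ∈ endpointLayer τ
  · rw [indicator_of_mem htτ]
    refine ENNReal.ofReal_le_ofReal ((norm_add_le _ _).trans ?_)
    rw [two_mul]
    refine add_le_add ((norm_indicator_le_norm_self _ _).trans ?_)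
      ((norm_indicator_le_norm_self _ _).trans (hC he₁))
    rw [norm_neg]
    exact hC he₀
  · have h := htτ
    rw [endpointLayer, mem_union, not_or] at h
    rw [indicator_of_notMem htτ, indicator_of_notMem h.1, indicator_of_notMem h.2, add_zero,
      norm_zero, ENNReal.ofReal_zero]

variable [CompleteSpace E]

theorem hasVelocityOn_clamp_smul {a α : ℝ} (b β : ℝ) (haα : a ≤ α) (x e : E) :
    HasVelocityOn (fun t => x + (max α (min t β) - α) • e) ((Ioc α β).indicator fun _ => e)
      a b := by
  refine ⟨((integrable_indicator_iff measurableSet_Ioc).2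
    (integrableOn_const measure_Ioc_lt_top.ne)).integrableOn, fun t ht => ?_⟩
  have hinter : Ioc a t ∩ Ioc α β = Ioc α (min t β) := by
    rw [Ioc_inter_Ioc, sup_of_le_right haα]
  have hstart : max α (min a β) = α := max_eq_left ((min_le_left a β).trans haα)
  simp only [hstart, sub_self, zero_smul, add_zero]
  rw [intervalIntegral.integral_of_le ht.1, setIntegral_indicator measurableSet_Ioc, hinter,
    setIntegral_const, Real.volume_real_Ioc, ← max_sub_sub_right, sub_self, max_comm]

theorem hasVelocityOn_endpointCorrection (hτ1 : τ ≤ 1) (e₀ e₁ : E) :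
    HasVelocityOn (endpointCorrection τ e₀ e₁) (endpointVelocity τ e₀ e₁) 0 1 := by
  refine ((hasVelocityOn_clamp_smul 1 τ le_rfl e₀ (-(τ⁻¹ • e₀))).add
    (hasVelocityOn_clamp_smul 1 1 (sub_nonneg.2 hτ1) 0 (τ⁻¹ • e₁))).congr
    fun t _ => ?_
  simp only [Pi.add_apply, endpointCorrection, div_eq_mul_inv]
  module

end EndpointCorrection

section ResolventCurve

open scoped NNReal

theorem add_sq_le_one_add_mul_sq_add (a b : ℝ≥0∞) {σ : ℝ} (hσ : 0 < σ) :
    (a + b) ^ 2 ≤ ENNReal.ofReal (1 + σ) * a ^ 2 + ENNReal.ofReal (1 + σ⁻¹) * b ^ 2 := by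
  have hpos : ∀ {s : ℝ}, 0 < s → ENNReal.ofReal (1 + s) ≠ 0 := fun hs =>
    (ENNReal.ofReal_pos.2 (by positivity)).ne'
  induction a with
  | top => simp [ENNReal.mul_top (hpos hσ)]
  | coe a =>
  induction b with
  | top => simp [ENNReal.mul_top (hpos (inv_pos.2 hσ))]
  | coe b =>
  have hsq : (1 + σ) * (a : ℝ) ^ 2 + (1 + σ⁻¹) * b ^ 2 - (a + b) ^ 2 = σ⁻¹ * (σ * a - b) ^ 2 := by
    field_simp
    ring
  have hyoung : ((a : ℝ) + b) ^ 2 ≤ (1 + σ) * a ^ 2 + (1 + σ⁻¹) * b ^ 2 := by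
    rw [← sub_nonneg, hsq]
    positivity
  rw [ENNReal.ofReal, ENNReal.ofReal]
  norm_cast
  rw [← NNReal.coe_le_coe]
  push_cast [Real.coe_toNNReal (1 + σ) (by positivity), Real.coe_toNNReal (1 + σ⁻¹) (by positivity)]
  exact hyoung

/-- Pointwise bound for the contribution of `endpointCorrection` (and of an error `τ` in the slope)
to the speed and slope of a corrected curve. -/
def endpointError (τ C t : ℝ) : ℝ≥0∞ :=
  ENNReal.ofReal τ + 3 * (endpointLayer τ).indicator (fun _ => ENNReal.ofReal (2 * C)) t

theorem measurable_endpointError (τ C : ℝ) : Measurable (endpointError τ C) :=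
  ((measurable_const.indicator (measurableSet_endpointLayer τ)).const_mul 3).const_add _

theorem lintegral_endpointError_sq_le {τ C : ℝ} (hτ : 0 < τ) (hτ1 : τ ≤ 1) (hC : 0 ≤ C) :
    ∫⁻ t in Ioc 0 1, endpointError τ C t ^ 2 ≤ ENNReal.ofReal (τ * (2 + 144 * C ^ 2)) := by
  have hpoint : ∀ t, endpointError τ C t ^ 2 ≤ ENNReal.ofReal (2 * τ ^ 2) +
      (endpointLayer τ).indicator (fun _ => ENNReal.ofReal (72 * C ^ 2)) t := fun t => by
    refine (add_sq_le_one_add_mul_sq_add _ _ one_pos).trans_eq ?_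
    rw [← ENNReal.ofReal_pow hτ.le, ← ENNReal.ofReal_mul (by norm_num), one_add_one_eq_two,
      inv_one, one_add_one_eq_two]
    congr 1
    by_cases ht : t ∈ endpointLayer τ
    · rw [indicator_of_mem ht, indicator_of_mem ht, mul_pow, ← ENNReal.ofReal_pow (by positivity),
        ← mul_assoc, show ENNReal.ofReal 2 * 3 ^ 2 = ENNReal.ofReal 18 by norm_num,
        ← ENNReal.ofReal_mul (by norm_num)]
      ring_nf
    · rw [indicator_of_notMem ht, indicator_of_notMem ht, mul_zero, zero_pow two_ne_zero, mul_zero]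
  calc ∫⁻ t in Ioc 0 1, endpointError τ C t ^ 2
      ≤ ∫⁻ t in Ioc 0 1, (ENNReal.ofReal (2 * τ ^ 2) +
          (endpointLayer τ).indicator (fun _ => ENNReal.ofReal (72 * C ^ 2)) t) :=
        lintegral_mono hpoint
    _ ≤ ENNReal.ofReal (2 * τ ^ 2) + ENNReal.ofReal (72 * C ^ 2) * (2 * ENNReal.ofReal τ) := by
        rw [lintegral_add_left measurable_const, setLIntegral_const, Real.volume_Ioc, sub_zero,
          ENNReal.ofReal_one, mul_one]
        gcongr
        refine (setLIntegral_le_lintegral _ _).trans ?_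
        rw [lintegral_indicator_const (measurableSet_endpointLayer τ)]
        gcongr
        exact volume_endpointLayer_le τ
    _ = ENNReal.ofReal (2 * τ ^ 2 + 72 * C ^ 2 * (2 * τ)) := by
        rw [ENNReal.ofReal_add (by positivity) (by positivity),
          ENNReal.ofReal_mul (p := 72 * C ^ 2) (by positivity), ENNReal.ofReal_mul zero_le_two,
          ENNReal.ofReal_mul zero_le_two, ENNReal.ofReal_ofNat]
    _ ≤ ENNReal.ofReal (τ * (2 + 144 * C ^ 2)) := ENNReal.ofReal_le_ofReal (by nlinarith)

variable {E : Type*} [NormedAddCommGroup E] [InnerProductSpace ℝ E] {lam τ σ C : ℝ}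
  {F : E → EReal} {J : E → E} {K : ℝ≥0} {γ c g v w : ℝ → E} {e₀ e₁ : E} {N B : ℝ → ℝ≥0∞}

theorem IsResolvent.gradNorm_apply_add_le (hJ : IsResolvent lam F τ J) (hτ : 0 < τ)
    (hK : LipschitzWith K J) (x e : E) : gradNorm lam F (J (x + e)) ≤
      ENNReal.ofReal (‖x - J x‖ / τ) + (1 + K) * ENNReal.ofReal (‖e‖ / τ) := by
  refine (hJ.gradNorm_apply_le hτ _).trans ?_
  rw [← ENNReal.ofReal_coe_nnreal, ← ENNReal.ofReal_one,
    ← ENNReal.ofReal_add zero_le_one K.coe_nonneg, ← ENNReal.ofReal_mul (by positivity),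
    ← ENNReal.ofReal_add (by positivity) (by positivity),
    mul_div_assoc', ← add_div]
  gcongr
  have hsplit : x + e - J (x + e) = (x - J x) + e + (J x - J (x + e)) := by abel
  have hlip := hK.norm_sub_le x (x + e)
  rw [sub_add_cancel_left, norm_neg] at hlip
  rw [hsplit]
  linarith [norm_add₃_le (a := x - J x) (b := e) (c := J x - J (x + e))]

variable [CompleteSpace E]

theorem actionFn_comp_add_le {a b : ℝ} (hK : LipschitzWith K J) (hγ : HasVelocityOn γ g a b)
    (hc : HasVelocityOn c w a b) (hv : HasVelocityOn (J ∘ (γ + c)) v a b) (hB : Measurable B)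
    (hwB : ∀ t ∈ Ioc a b, K * ‖w t‖ₑ ≤ B t)
    (hNB : ∀ t ∈ Ioc a b, gradNorm lam F ((J ∘ (γ + c)) t) ≤ K * N t + B t) (hσ : 0 < σ) :
    actionFn lam F a b (J ∘ (γ + c)) ≤
      ENNReal.ofReal (1 + σ) * (K ^ 2 * ∫⁻ t in Ioc a b, (‖g t‖ₑ ^ 2 + N t ^ 2)) +
        ENNReal.ofReal (1 + σ⁻¹) * (2 * ∫⁻ t in Ioc a b, B t ^ 2) := by
  have hyoung : ∀ {q A e : ℝ≥0∞}, q ≤ K * A + e →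
      q ^ 2 ≤ ENNReal.ofReal (1 + σ) * (K ^ 2 * A ^ 2) + ENNReal.ofReal (1 + σ⁻¹) * e ^ 2 :=
    fun h => by
      rw [← mul_pow]
      exact (pow_le_pow_left' h 2).trans (add_sq_le_one_add_mul_sq_add _ _ hσ)
  have hspeed : ∀ᵐ t ∂volume.restrict (Ioc a b), ‖v t‖ₑ ≤ K * ‖g t‖ₑ + B t := by
    filter_upwards [(hγ.add hc).ae_enorm_comp_le hK hv, ae_restrict_mem measurableSet_Ioc]
      with t hvt ht
    refine hvt.trans ((mul_le_mul_right (enorm_add_le _ _) _).trans ?_)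
    rw [mul_add]
    exact add_le_add_right (hwB t ht) _
  calc actionFn lam F a b (J ∘ (γ + c))
      = ∫⁻ t in Ioc a b, (‖v t‖ₑ ^ 2 + gradNorm lam F ((J ∘ (γ + c)) t) ^ 2) := hv.actionFn_eq _ _
    _ ≤ ∫⁻ t in Ioc a b, (ENNReal.ofReal (1 + σ) * (K ^ 2 * (‖g t‖ₑ ^ 2 + N t ^ 2)) +
          ENNReal.ofReal (1 + σ⁻¹) * (2 * B t ^ 2)) := by
        refine lintegral_mono_ae ?_
        filter_upwards [hspeed, ae_restrict_mem measurableSet_Ioc] with t hvt ht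
        refine (add_le_add (hyoung hvt) (hyoung (hNB t ht))).trans_eq ?_
        ring
    _ = _ := by
        rw [lintegral_add_right _ (((hB.pow_const 2).const_mul 2).const_mul _),
          lintegral_const_mul' _ _ ENNReal.ofReal_ne_top,
          lintegral_const_mul' _ _ ENNReal.ofReal_ne_top,
          lintegral_const_mul' _ _ (by finiteness), lintegral_const_mul' _ _ (by finiteness)]

theorem HasVelocityOn.exists_comp_add_endpointCorrection (hK : LipschitzWith K J) (hτ : 0 < τ)
    (hτ1 : τ ≤ 1) (he₀ : ‖e₀‖ ≤ τ * C) (he₁ : ‖e₁‖ ≤ τ * C) (hγ : HasVelocityOn γ g 0 1)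
    (hg : ∫⁻ t in Ioc (0 : ℝ) 1, ‖g t‖ₑ ^ 2 ≠ ⊤) :
    ∃ v, HasVelocityOn (J ∘ (γ + endpointCorrection τ e₀ e₁)) v 0 1 := by
  refine (hγ.add (hasVelocityOn_endpointCorrection hτ1 e₀ e₁)).exists_comp hK ?_
  have hbound : ∀ t, ‖(g + endpointVelocity τ e₀ e₁) t‖ₑ ^ 2 ≤
      ENNReal.ofReal 2 * ‖g t‖ₑ ^ 2 + ENNReal.ofReal 2 * ENNReal.ofReal (2 * C) ^ 2 := fun t => by
    have hw := (enorm_endpointVelocity_le hτ he₀ he₁ t).trans (indicator_le_self _ _ t)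
    refine (pow_le_pow_left' ((enorm_add_le _ _).trans (add_le_add_right hw _)) 2).trans ?_
    simpa only [inv_one, one_add_one_eq_two] using add_sq_le_one_add_mul_sq_add _ _ one_pos
  refine ne_top_of_le_ne_top ?_ (lintegral_mono hbound)
  rw [lintegral_add_right _ measurable_const, lintegral_const_mul' _ _ ENNReal.ofReal_ne_top,
    setLIntegral_const]
  exact ENNReal.add_ne_top.2 ⟨ENNReal.mul_ne_top ENNReal.ofReal_ne_top hg,
    ENNReal.mul_ne_top (by finiteness) measure_Ioc_lt_top.ne⟩

theorem IsResolvent.Theta_comp_add_endpointCorrection_le (hJ : IsResolvent lam F τ J)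
    (hK : LipschitzWith K J) (hK2 : K ≤ 2) (hτ : 0 < τ) (hτ1 : τ ≤ 1) (he₀ : ‖e₀‖ ≤ τ * C)
    (he₁ : ‖e₁‖ ≤ τ * C) (hγ : HasVelocityOn γ g 0 1)
    (hg : ∫⁻ t in Ioc (0 : ℝ) 1, ‖g t‖ₑ ^ 2 ≠ ⊤)
    (hN : ∀ t ∈ Ioc (0 : ℝ) 1, ENNReal.ofReal (‖γ t - J (γ t)‖ / τ) ≤ K * N t + ENNReal.ofReal τ)
    (hσ : 0 < σ) :
    Theta lam F (J (γ 0 + e₀)) (J (γ 1 + e₁)) (J ∘ (γ + endpointCorrection τ e₀ e₁)) ≤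
      ENNReal.ofReal (1 + σ) * (K ^ 2 * ∫⁻ t in Ioc 0 1, (‖g t‖ₑ ^ 2 + N t ^ 2)) +
        ENNReal.ofReal (1 + σ⁻¹) * (2 * ENNReal.ofReal (τ * (2 + 144 * C ^ 2))) := by
  obtain ⟨v, hv⟩ := hγ.exists_comp_add_endpointCorrection hK hτ hτ1 he₀ he₁ hg
  have hC : 0 ≤ C := nonneg_of_mul_nonneg_right ((norm_nonneg _).trans he₀) hτ
  have hK2' : (K : ℝ≥0∞) ≤ 2 := by exact_mod_cast hK2
  have hends : (J ∘ (γ + endpointCorrection τ e₀ e₁)) 0 = J (γ 0 + e₀) ∧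
      (J ∘ (γ + endpointCorrection τ e₀ e₁)) 1 = J (γ 1 + e₁) := by
    simp only [Function.comp_apply, Pi.add_apply, endpointCorrection_zero hτ hτ1,
      endpointCorrection_one hτ hτ1, and_self]
  rw [Theta, if_pos hends]
  refine (actionFn_comp_add_le (N := N) hK hγ (hasVelocityOn_endpointCorrection hτ1 e₀ e₁) hv
    (measurable_endpointError τ C) (fun t _ => ?_) (fun t ht => ?_) hσ).trans ?_
  · calc K * ‖endpointVelocity τ e₀ e₁ t‖ₑ
        ≤ 3 * (endpointLayer τ).indicator (fun _ => ENNReal.ofReal (2 * C)) t :=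
          mul_le_mul' (hK2'.trans (by norm_num)) (enorm_endpointVelocity_le hτ he₀ he₁ t)
      _ ≤ endpointError τ C t := le_add_self
  · have hc : ENNReal.ofReal (‖endpointCorrection τ e₀ e₁ t‖ / τ) ≤
        (endpointLayer τ).indicator (fun _ => ENNReal.ofReal (2 * C)) t := by
      rw [ENNReal.ofReal_div_of_pos hτ, ofReal_norm]
      exact ENNReal.div_le_of_le_mul' (enorm_endpointCorrection_le hτ he₀ he₁ ht)
    refine (hJ.gradNorm_apply_add_le hτ hK _ _).trans ?_
    rw [endpointError, ← add_assoc]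
    refine add_le_add (hN t ht) (mul_le_mul' ?_ hc)
    exact (add_le_add_right hK2' 1).trans_eq (by norm_num)
  · gcongr
    exact lintegral_endpointError_sq_le hτ hτ1 hC

end ResolventCurve

section RecoveryCurve

open scoped NNReal

theorem tendsto_sq_nhdsGT_zero : Tendsto (fun σ : ℝ => σ ^ 2) (𝓝[>] 0) (𝓝[>] 0) := by
  refine tendsto_nhdsWithin_iff.2 ⟨?_, ?_⟩
  · have h : Tendsto (fun σ : ℝ => σ ^ 2) (𝓝 0) (𝓝 (0 ^ 2)) := Continuous.tendsto (by fun_prop) 0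
    rw [zero_pow two_ne_zero] at h
    exact h.mono_left nhdsWithin_le_nhds
  · filter_upwards [self_mem_nhdsWithin] with σ hσ using pow_pos (mem_Ioi.1 hσ) 2

theorem eventually_ofReal_mul_add_le {I : ℝ≥0∞} (hI : I ≠ ⊤) (lam D : ℝ) {ε : ℝ} (hε : 0 < ε) :
    ∀ᶠ σ : ℝ in 𝓝[>] 0,
      ENNReal.ofReal (1 + σ) * (ENNReal.ofReal (1 + lam * σ ^ 2)⁻¹ ^ 2 * I) +
        ENNReal.ofReal (1 + σ⁻¹) * (2 * ENNReal.ofReal (σ ^ 2 * D)) ≤ I + ENNReal.ofReal ε := by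
  have hmain : Tendsto (fun σ : ℝ => ENNReal.ofReal ((1 + σ) * (1 + lam * σ ^ 2)⁻¹ ^ 2) * I)
      (𝓝[>] 0) (𝓝 I) := by
    have h : Tendsto (fun σ : ℝ => (1 + σ) * (1 + lam * σ ^ 2)⁻¹ ^ 2) (𝓝[>] 0)
        (𝓝 ((1 + 0) * 1 ^ 2)) :=
      (tendsto_nhdsWithin_of_tendsto_nhds (Continuous.tendsto (by fun_prop) 0)).mul
        (((tendsto_inv_one_add_mul_nhdsGT lam).comp tendsto_sq_nhdsGT_zero).pow 2)
    simpa only [add_zero, one_pow, mul_one, ENNReal.ofReal_one, one_mul] using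
      ENNReal.Tendsto.mul_const (ENNReal.tendsto_ofReal h) (Or.inr hI)
  have herror : Tendsto (fun σ : ℝ => ENNReal.ofReal (2 * ((σ ^ 2 + σ) * D))) (𝓝[>] 0) (𝓝 0) := by
    have h : Tendsto (fun σ : ℝ => 2 * ((σ ^ 2 + σ) * D)) (𝓝 0) (𝓝 (2 * ((0 ^ 2 + 0) * D))) :=
      Continuous.tendsto (by fun_prop) 0
    simpa only [zero_pow two_ne_zero, add_zero, zero_mul, mul_zero, ENNReal.ofReal_zero] using
      ENNReal.tendsto_ofReal (h.mono_left nhdsWithin_le_nhds)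
  have hlt : I + 0 < I + ENNReal.ofReal ε :=
    ENNReal.add_lt_add_left hI (ENNReal.ofReal_pos.2 hε)
  filter_upwards [(hmain.add herror).eventually_le_const hlt,
    tendsto_sq_nhdsGT_zero.eventually (eventually_one_add_mul_pos lam), self_mem_nhdsWithin]
    with σ hle hpos hσ
  have hσ0 : 0 < σ := mem_Ioi.1 hσ
  refine le_trans (le_of_eq ?_) hle
  rw [← ENNReal.ofReal_pow (by positivity), ← mul_assoc, ← ENNReal.ofReal_mul (by positivity),
    ← ENNReal.ofReal_ofNat 2, ← ENNReal.ofReal_mul zero_le_two,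
    ← ENNReal.ofReal_mul (by positivity)]
  congr 2
  field_simp

variable {E : Type*} [NormedAddCommGroup E] [InnerProductSpace ℝ E] {lam τ σ ρ C C' : ℝ}
  {fh : ℕ → E → EReal} {f : E → EReal} {Jh : ℕ → E → E} {J : E → E} {K : ℝ≥0}
  {a p a₀ a₁ p₀ p₁ : ℕ → E} {γ g : ℝ → E} {x : E} {S : Set E}

/-- The sequence `a` converges to `x` and admits subgradients `p h ∈ ∂f_h(a h)` bounded by `C`; this
is the condition imposed on the endpoints of the recovery curves. -/
structure TendstoWithSubgradients (lam : ℝ) (fh : ℕ → E → EReal) (C : ℝ) (a p : ℕ → E) (x : E) :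
    Prop where
  tendsto : Tendsto a atTop (𝓝 x)
  mem_subdiff : ∀ h, p h ∈ subdiff lam (fh h) (a h)
  norm_le : ∀ h, ‖p h‖ ≤ C

namespace TendstoWithSubgradients

theorem mono (ha : TendstoWithSubgradients lam fh C a p x) (hC : C ≤ C') :
    TendstoWithSubgradients lam fh C' a p x :=
  ⟨ha.tendsto, ha.mem_subdiff, fun h => (ha.norm_le h).trans hC⟩

theorem eventually_norm_add_smul_sub_le (ha : TendstoWithSubgradients lam fh C a p x)
    (hτ : 0 < τ) : ∀ᶠ h in atTop, ‖a h + τ • p h - x‖ ≤ τ * (C + 1) := by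
  filter_upwards [Metric.tendsto_nhds.1 ha.tendsto τ hτ] with h hh
  rw [dist_eq_norm] at hh
  calc ‖a h + τ • p h - x‖ = ‖τ • p h + (a h - x)‖ := by congr 1; abel
    _ ≤ τ * ‖p h‖ + ‖a h - x‖ := by
        rw [← Real.norm_of_nonneg hτ.le, ← norm_smul, Real.norm_of_nonneg hτ.le]
        exact norm_add_le _ _
    _ ≤ τ * C + τ := by
        gcongr
        exact ha.norm_le h
    _ = τ * (C + 1) := by ring

end TendstoWithSubgradients

variable [CompleteSpace E]

theorem exists_tendstoWithSubgradients (hfh : ∀ h, ProperFn (fh h)) (ha : Tendsto a atTop (𝓝 x))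
    (hbdd : (⨆ h, gradNorm lam (fh h) (a h)) ≠ ⊤) :
    ∃ C p, TendstoWithSubgradients lam fh C a p x := by
  have hle : ∀ h, gradNorm lam (fh h) (a h) ≤ ⨆ h, gradNorm lam (fh h) (a h) :=
    le_iSup fun h => gradNorm lam (fh h) (a h)
  choose p hp hpa using fun h =>
    exists_mem_subdiff_gradNorm_eq (hfh h) (ne_top_of_le_ne_top hbdd (hle h))
  refine ⟨_, p, ha, hp, fun h => (ENNReal.ofReal_le_iff_le_toReal hbdd).1 ?_⟩
  exact (hpa h).symm.trans_le (hle h)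

theorem Mosco.tendstoUniformlyOn_resolvent (hM : Mosco fh f) (hfh : ∀ h, ProperFn (fh h))
    (hf : ProperFn f) (hτ : 0 < τ) (hlam : 0 < 1 + lam * τ)
    (hJh : ∀ h, IsResolvent lam (fh h) τ (Jh h)) (hJ : IsResolvent lam f τ J)
    (ha : TendstoWithSubgradients lam fh C a p x) (hS : IsCompact S) :
    TendstoUniformlyOn Jh J atTop S := by
  have hp : Bornology.IsBounded (range p) :=
    isBounded_iff_forall_norm_le.2 ⟨C, forall_mem_range.2 ha.norm_le⟩
  exact tendstoUniformlyOn_of_lipschitzWith (D := univ)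
    (Eventually.of_forall fun h => (hJh h).lipschitzWith (hfh h) hτ hlam)
    (hJ.lipschitzWith hf hτ hlam)
    (fun y _ => hM.tendsto_resolvent hfh hf hτ hlam hJh hJ ha.mem_subdiff
      (Metric.isBounded_range_of_tendsto a ha.tendsto) hp y)
    hS (by rw [closure_univ]; exact subset_univ S)

theorem IsResolvent.ofReal_norm_sub_div_le_of_dist_le {J' : E → E} {δ : ℝ}
    (hJ : IsResolvent lam f τ J) (hf : ProperFn f) (hτ : 0 < τ) (hlam : 0 < 1 + lam * τ)
    (hJJ' : ‖J x - J' x‖ ≤ τ * δ) : ENNReal.ofReal (‖x - J' x‖ / τ) ≤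
      (1 + lam * τ)⁻¹.toNNReal * gradNorm lam f x + ENNReal.ofReal δ := by
  by_cases hx : gradNorm lam f x = ⊤
  · have hK : ((1 + lam * τ)⁻¹.toNNReal : ℝ≥0∞) ≠ 0 :=
      (ENNReal.ofReal_pos.2 (inv_pos.2 hlam)).ne'
    rw [hx, ENNReal.mul_top hK, top_add]
    exact le_top
  calc ENNReal.ofReal (‖x - J' x‖ / τ) ≤ ENNReal.ofReal (‖x - J x‖ / τ + δ) := by
        gcongr
        rw [div_add' _ _ _ hτ.ne', mul_comm δ]
        gcongr
        exact (norm_sub_le_norm_sub_add_norm_sub _ _ _).trans (add_le_add_right hJJ' _)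
    _ ≤ ENNReal.ofReal (‖x - J x‖ / τ) + ENNReal.ofReal δ := ENNReal.ofReal_add_le
    _ ≤ (1 + lam * τ)⁻¹.toNNReal * gradNorm lam f x + ENNReal.ofReal δ := by
        gcongr
        exact hJ.norm_sub_apply_div_le hf hτ hlam (hJ.lipschitzWith hf hτ hlam) hx

theorem Mosco.eventually_exists_curve (hM : Mosco fh f) (hfh : ∀ h, ProperFn (fh h))
    (hf : ProperFn f) (hτ : 0 < τ) (hτ1 : τ ≤ 1) (hlam : 0 < 1 + lam * τ)
    (hlam2 : (1 + lam * τ)⁻¹ ≤ 2) (hJh : ∀ h, IsResolvent lam (fh h) τ (Jh h))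
    (hJ : IsResolvent lam f τ J) (ha₀ : TendstoWithSubgradients lam fh C a₀ p₀ (γ 0))
    (ha₁ : TendstoWithSubgradients lam fh C a₁ p₁ (γ 1)) (hγ : HasVelocityOn γ g 0 1)
    (hact : actionFn lam f 0 1 γ ≠ ⊤) (hσ : 0 < σ) :
    ∀ᶠ h in atTop, ∃ u, ContinuousOn u (Icc 0 1) ∧
      (∀ t ∈ Icc (0 : ℝ) 1, ‖u t - γ t‖ ≤ 4 * (τ * (C + 1)) + τ + ‖J (γ t) - γ t‖) ∧
      Theta lam (fh h) (a₀ h) (a₁ h) u ≤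
        ENNReal.ofReal (1 + σ) * (ENNReal.ofReal (1 + lam * τ)⁻¹ ^ 2 * actionFn lam f 0 1 γ) +
          ENNReal.ofReal (1 + σ⁻¹) * (2 * ENNReal.ofReal (τ * (2 + 144 * (C + 1) ^ 2))) := by
  have hK2 : (1 + lam * τ)⁻¹.toNNReal ≤ 2 := Real.toNNReal_le_iff_le_coe.2 hlam2
  have hL : ∀ h, LipschitzWith (1 + lam * τ)⁻¹.toNNReal (Jh h) := fun h =>
    (hJh h).lipschitzWith (hfh h) hτ hlam
  have huniform := Metric.tendstoUniformlyOn_iff.1 (hM.tendstoUniformlyOn_resolvent hfh hf hτ hlam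
    hJh hJ ha₀ (isCompact_Icc.image_of_continuousOn hγ.continuousOn)) (τ * τ) (by positivity)
  rw [hγ.actionFn_eq] at hact ⊢
  have hg : ∫⁻ t in Ioc (0 : ℝ) 1, ‖g t‖ₑ ^ 2 ≠ ⊤ :=
    ne_top_of_le_ne_top hact (lintegral_mono fun t => le_self_add)
  filter_upwards [huniform, ha₀.eventually_norm_add_smul_sub_le hτ,
    ha₁.eventually_norm_add_smul_sub_le hτ] with h hclose he₀ he₁
  have hclose : ∀ t ∈ Icc (0 : ℝ) 1, ‖J (γ t) - Jh h (γ t)‖ ≤ τ * τ := fun t ht => by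
    rw [← dist_eq_norm]
    exact (hclose _ (mem_image_of_mem γ ht)).le
  set c := endpointCorrection τ (a₀ h + τ • p₀ h - γ 0) (a₁ h + τ • p₁ h - γ 1)
  refine ⟨Jh h ∘ (γ + c), ?_, fun t ht => ?_, ?_⟩
  · exact (hL h).continuous.comp_continuousOn
      (hγ.add (hasVelocityOn_endpointCorrection hτ1 _ _)).continuousOn
  · have hshift : ‖Jh h (γ t + c t) - Jh h (γ t)‖ ≤ 4 * (τ * (C + 1)) := by
      refine (((hL h).weaken hK2).norm_sub_le _ _).trans ?_
      rw [add_sub_cancel_left, show (4 : ℝ) = 2 * 2 by norm_num, mul_assoc]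
      exact mul_le_mul_of_nonneg_left (norm_endpointCorrection_le hτ he₀ he₁ t) zero_le_two
    have hcloset : ‖Jh h (γ t) - J (γ t)‖ ≤ τ := by
      rw [norm_sub_rev]
      exact (hclose t ht).trans (mul_le_of_le_one_left hτ.le hτ1)
    have hsplit : Jh h (γ t + c t) - γ t = (Jh h (γ t + c t) - Jh h (γ t)) +
        (Jh h (γ t) - J (γ t)) + (J (γ t) - γ t) := by abel
    rw [Function.comp_apply, Pi.add_apply, hsplit]
    exact norm_add₃_le.trans (by gcongr)
  · have hend := (hJh h).Theta_comp_add_endpointCorrection_le (hL h) hK2 hτ hτ1 he₀ he₁ hγ hg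
      (fun t ht => hJ.ofReal_norm_sub_div_le_of_dist_le hf hτ hlam
        (hclose t (Ioc_subset_Icc_self ht))) hσ
    rwa [add_sub_cancel, add_sub_cancel, (hJh h).apply_add_smul (hfh h) hτ hlam
      (ha₀.mem_subdiff h), (hJh h).apply_add_smul (hfh h) hτ hlam (ha₁.mem_subdiff h)] at hend

theorem image_Icc_subset_closure_gradNorm_ne_top (hγ : HasVelocityOn γ g 0 1)
    (hact : actionFn lam f 0 1 γ ≠ ⊤) :
    γ '' Icc 0 1 ⊆ closure {x | gradNorm lam f x ≠ ⊤} := by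
  rw [hγ.actionFn_eq] at hact
  have hgrad : ∫⁻ t in Ioc (0 : ℝ) 1, gradNorm lam f (γ t) ^ 2 ≠ ⊤ :=
    ne_top_of_le_ne_top hact (lintegral_mono fun t => le_add_self)
  rintro _ ⟨t, ht, rfl⟩
  have htD := Icc_subset_closure_of_lintegral_ne_top one_pos hgrad ht
  refine closure_mono ?_ (((hγ.continuousOn t ht).mono (sep_subset _ _)).mem_closure_image htD)
  rintro _ ⟨s, ⟨-, hs⟩, rfl⟩
  exact fun h => hs (by rw [h, ENNReal.top_pow two_ne_zero])

theorem eventually_norm_Jres_sub_le (hf : ProperFn f) (hconv : LambdaConvex lam f)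
    (hlsc : LowerSemicontinuous f) (hγ : HasVelocityOn γ g 0 1) (hact : actionFn lam f 0 1 γ ≠ ⊤)
    {ε : ℝ} (hε : 0 < ε) :
    ∀ᶠ τ in 𝓝[>] 0, ∀ t ∈ Icc (0 : ℝ) 1, ‖Jres f τ (γ t) - γ t‖ ≤ ε := by
  have huniform := tendstoUniformlyOn_Jres hf hconv hlsc
    (isCompact_Icc.image_of_continuousOn hγ.continuousOn)
    (image_Icc_subset_closure_gradNorm_ne_top hγ hact)
  filter_upwards [Metric.tendstoUniformlyOn_iff.1 huniform ε hε] with τ hτ t ht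
  rw [← dist_eq_norm, dist_comm]
  exact (hτ _ (mem_image_of_mem γ ht)).le

theorem Mosco.eventually_exists_curve_le (hM : Mosco fh f) (hfh : ∀ h, ProperFn (fh h))
    (hfh_conv : ∀ h, LambdaConvex lam (fh h)) (hfh_lsc : ∀ h, LowerSemicontinuous (fh h))
    (hf : ProperFn f) (hf_conv : LambdaConvex lam f) (hf_lsc : LowerSemicontinuous f)
    (ha₀ : TendstoWithSubgradients lam fh C a₀ p₀ (γ 0))
    (ha₁ : TendstoWithSubgradients lam fh C a₁ p₁ (γ 1)) (hγ : HasVelocityOn γ g 0 1)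
    (hact : actionFn lam f 0 1 γ ≠ ⊤) {ε : ℝ} (hε : 0 < ε) :
    ∀ᶠ h in atTop, ∃ u, ContinuousOn u (Icc 0 1) ∧ (∀ t ∈ Icc (0 : ℝ) 1, ‖u t - γ t‖ ≤ ε) ∧
      Theta lam (fh h) (a₀ h) (a₁ h) u ≤ actionFn lam f 0 1 γ + ENNReal.ofReal ε := by
  have hsmall : ∀ᶠ τ in 𝓝[>] (0 : ℝ), 4 * (τ * (C + 1)) + τ < ε / 2 := by
    have h : ContinuousAt (fun τ : ℝ => 4 * (τ * (C + 1)) + τ) 0 := by fun_prop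
    exact (h.tendsto.mono_left nhdsWithin_le_nhds).eventually_lt_const (by simpa using hε)
  have hτ_cond := (eventually_mem_nhdsWithin (a := (0 : ℝ)) (s := Ioi 0)).and <|
    (eventually_one_add_mul_pos lam).and <|
    ((tendsto_inv_one_add_mul_nhdsGT lam).eventually_le_const one_lt_two).and <|
    (eventually_nhdsWithin_of_eventually_nhds (eventually_le_nhds one_pos)).and <|
    hsmall.and (eventually_norm_Jres_sub_le hf hf_conv hf_lsc hγ hact (half_pos hε))
  obtain ⟨σ, hσ, ⟨hτ, hlam, hlam2, hτ1, hsmall, hnear⟩, hle⟩ :=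
    (eventually_mem_nhdsWithin.and ((tendsto_sq_nhdsGT_zero.eventually hτ_cond).and
      (eventually_ofReal_mul_add_le hact lam (2 + 144 * (C + 1) ^ 2) hε))).exists
  filter_upwards [hM.eventually_exists_curve hfh hf hτ hτ1 hlam hlam2
    (fun h => isResolvent_Jres (hfh h) (hfh_conv h) (hfh_lsc h) hτ hlam)
    (isResolvent_Jres hf hf_conv hf_lsc hτ hlam) ha₀ ha₁ hγ hact hσ]
  rintro h ⟨u, hu, hclose, haction⟩
  refine ⟨u, hu, fun t ht => (hclose t ht).trans ?_, haction.trans hle⟩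
  linarith [hnear t ht]

end RecoveryCurve

theorem exists_seq_of_forall_eventually_exists {X : Type*} [Nonempty X] {P : ℕ → ℝ → X → Prop}
    (hmono : ∀ h x, Monotone (P h · x)) (hP : ∀ ε > 0, ∀ᶠ h in atTop, ∃ x, P h ε x) :
    ∃ u : ℕ → X, ∀ ε > 0, ∀ᶠ h in atTop, P h ε (u h) := by
  let Q : ℕ → ℕ → Prop := fun h n => ∃ x, P h (1 / (n + 1)) x
  let N : ℕ → ℕ := fun h => Nat.findGreatest (Q h) h
  refine ⟨fun h => Classical.epsilon (P h (1 / (N h + 1))), fun ε hε => ?_⟩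
  obtain ⟨m, hm⟩ := exists_nat_one_div_lt hε
  filter_upwards [hP (1 / (m + 1)) Nat.one_div_pos_of_nat, eventually_ge_atTop m] with h hQ hmh
  have hspec : Q h (N h) := Nat.findGreatest_spec (P := Q h) hmh hQ
  have hmN : m ≤ N h := Nat.le_findGreatest hmh hQ
  exact hmono h _ ((Nat.one_div_le_one_div hmN).trans hm.le) (Classical.epsilon_spec hspec)

theorem exists_hasVelocityOn_of_Theta_ne_top {E : Type*} [NormedAddCommGroup E]
    [InnerProductSpace ℝ E] {lam : ℝ} {f : E → EReal} {x₀ x₁ : E} {γ : ℝ → E}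
    (h : Theta lam f x₀ x₁ γ ≠ ⊤) : γ 0 = x₀ ∧ γ 1 = x₁ ∧ ∃ g, HasVelocityOn γ g 0 1 := by
  have hend : γ 0 = x₀ ∧ γ 1 = x₁ := by
    by_contra hne
    exact h (if_neg hne)
  rw [Theta, if_pos hend, actionFn] at h
  refine ⟨hend.1, hend.2, ?_⟩
  by_contra hAC
  exact h (dif_neg hAC)

theorem tendstoUniformlyOn_of_forall_eventually_norm_sub_le {ι α E : Type*}
    [SeminormedAddCommGroup E] {l : Filter ι} {F : ι → α → E} {G : α → E} {S : Set α}
    (h : ∀ ε > 0, ∀ᶠ i in l, ∀ t ∈ S, ‖F i t - G t‖ ≤ ε) : TendstoUniformlyOn F G l S := by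
  refine Metric.tendstoUniformlyOn_iff.2 fun ε hε => ?_
  filter_upwards [h (ε / 2) (half_pos hε)] with i hi t ht
  rw [dist_comm, dist_eq_norm]
  exact (hi t ht).trans_lt (half_lt_self hε)

theorem limsup_le_of_forall_eventually_le_add_ofReal {ι : Type*} {l : Filter ι} {F : ι → ℝ≥0∞}
    {I : ℝ≥0∞} (h : ∀ ε > 0, ∀ᶠ i in l, F i ≤ I + ENNReal.ofReal ε) : limsup F l ≤ I := by
  refine ENNReal.le_of_forall_pos_le_add fun ε hε _ => limsup_le_of_le (by isBoundedDefault) ?_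
  simpa only [ENNReal.ofReal_coe_nnreal] using h ε (NNReal.coe_pos.2 hε)

theorem exists_seq_of_forall_eventually_exists_curve {E : Type*} [NormedAddCommGroup E] {γ : ℝ → E}
    {S : Set ℝ} {Φ : ℕ → (ℝ → E) → ℝ≥0∞} {I : ℝ≥0∞} (hγ : ContinuousOn γ S)
    (h : ∀ ε > 0, ∀ᶠ n in atTop, ∃ u, ContinuousOn u S ∧ (∀ t ∈ S, ‖u t - γ t‖ ≤ ε) ∧
      Φ n u ≤ I + ENNReal.ofReal ε) :
    ∃ γh : ℕ → ℝ → E, (∀ n, ContinuousOn (γh n) S) ∧ TendstoUniformlyOn γh γ atTop S ∧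
      limsup (fun n => Φ n (γh n)) atTop ≤ I := by
  have : Nonempty {u : ℝ → E // ContinuousOn u S} := ⟨⟨γ, hγ⟩⟩
  obtain ⟨u, hu⟩ := exists_seq_of_forall_eventually_exists
    (P := fun n ε (u : {u : ℝ → E // ContinuousOn u S}) =>
      (∀ t ∈ S, ‖u.1 t - γ t‖ ≤ ε) ∧ Φ n u ≤ I + ENNReal.ofReal ε)
    (fun n u ε ε' hε hP => ⟨fun t ht => (hP.1 t ht).trans hε, hP.2.trans (by gcongr)⟩)
    fun ε hε => (h ε hε).mono fun n ⟨u, hu, hP⟩ => ⟨⟨u, hu⟩, hP⟩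
  exact ⟨fun n => u n, fun n => (u n).2,
    tendstoUniformlyOn_of_forall_eventually_norm_sub_le fun ε hε => (hu ε hε).mono fun _ hh => hh.1,
    limsup_le_of_forall_eventually_le_add_ofReal fun ε hε => (hu ε hε).mono fun _ hh => hh.2⟩

/-- the Γ-limsup inequality (existence of recovery sequences). -/
theorem statement2 (lam : ℝ) (fh : ℕ → H → EReal) (f : H → EReal)
    (hfh_proper : ∀ h, ProperFn (fh h)) (hfh_conv : ∀ h, LambdaConvex lam (fh h))
    (hfh_lsc : ∀ h, LowerSemicontinuous (fh h))
    (hf_proper : ProperFn f) (hf_conv : LambdaConvex lam f) (hf_lsc : LowerSemicontinuous f)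
    (hM : Mosco fh f)
    (xh0 xh1 : ℕ → H) (x0 x1 : H)
    (hx0 : Tendsto xh0 atTop (𝓝 x0)) (hx1 : Tendsto xh1 atTop (𝓝 x1))
    (hb0 : (⨆ h, gradNorm lam (fh h) (xh0 h)) ≠ ⊤)
    (hb1 : (⨆ h, gradNorm lam (fh h) (xh1 h)) ≠ ⊤)
    (γ : ℝ → H) (hγ : ContinuousOn γ (Icc 0 1)) :
    ∃ γh : ℕ → ℝ → H, (∀ h, ContinuousOn (γh h) (Icc 0 1)) ∧
      TendstoUniformlyOn γh γ atTop (Icc 0 1) ∧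
      Filter.limsup (fun h => Theta lam (fh h) (xh0 h) (xh1 h) (γh h)) atTop
        ≤ Theta lam f x0 x1 γ := by
  by_cases hfin : Theta lam f x0 x1 γ = ⊤
  · exact ⟨fun _ => γ, fun _ => hγ,
      fun _ hv => Eventually.of_forall fun _ _ _ => refl_mem_uniformity hv, hfin.symm ▸ le_top⟩
  obtain ⟨rfl, rfl, g, hg⟩ := exists_hasVelocityOn_of_Theta_ne_top hfin
  have hTheta : Theta lam f (γ 0) (γ 1) γ = actionFn lam f 0 1 γ := if_pos ⟨rfl, rfl⟩
  rw [hTheta] at hfin ⊢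
  obtain ⟨C₀, p₀, hp₀⟩ := exists_tendstoWithSubgradients hfh_proper hx0 hb0
  obtain ⟨C₁, p₁, hp₁⟩ := exists_tendstoWithSubgradients hfh_proper hx1 hb1
  refine exists_seq_of_forall_eventually_exists_curve hγ fun ε hε => ?_
  exact hM.eventually_exists_curve_le hfh_proper hfh_conv hfh_lsc hf_proper hf_conv hf_lsc
    (hp₀.mono (le_max_left C₀ C₁)) (hp₁.mono (le_max_right C₀ C₁)) hg hfin hε

end
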